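/- Let F be a finite field and let n ≥ 3. Then every matrix in SL_n(F[X]), where F[X] is the polynomial ring in one variable over F, is a product of at most (3n² − n)/2 + 29 elementary matrices. In particular, SL_n(F[X]) is boundedly generated by the elementary matrices. -/

import Mathlib

/-!
The proof reduces `SL_n` to `SL_2` and then factors a `2 × 2` matrix into powers of itself.

*Reduction of the size.*  `F[X]` is a principal ideal domain, so in a unimodular row of length at
least three one entry can be changed by a multiple of the last one so that all entries but the last
are already unimodular (`exists_unimodular`).  With one such operation and `3 (n - 1)` further ones
the last row and column are cleared (`ElemProd.step`).  The costs `3 (n - 1) + 1` sum up to the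
quadratic part of the bound, and what is left is a `2 × 2` block inside `SL_3`, which costs at most
`32` transvections (`elemProd_block`).

*The `2 × 2` block.*  Let `A = (a, b; c, d)` with `a ≠ 0`.  By the analogue of Dirichlet's theorem with
prescribed degree (`exists_irreducible_mod`), two operations make `b` and `c` irreducible of coprime
degrees `m`, `n`.  With `q` the order of `F`, put `k = (q ^ m - 1) / (q - 1)` and
`l = (q ^ n - 1) / (q - 1)`.  These exponents are coprime, and `a ^ k` modulo `b` and `a ^ l` modulo `c`
are norms from finite extensions of `F`, hence units of `F` (`exists_dvd_pow_sub_unit`).  So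
`A = (A ^ k) ^ x * (A ^ l) ^ y` for suitable integers `x`, `y`.  By Cayley-Hamilton each factor has the
form `g = r + s A`, and `det g = 1` forces `s ∣ (r - 1) (r + 1)`; writing `s = s₁ s₂` accordingly, the
third coordinate is used to strip `s₁` and `s₂` off the off-diagonal entry `s b` of `g`.  Then the
corner entry can be reduced modulo `b` to a unit, after which elimination is immediate
(`ElemProd.of_factors`, `PowLike.elemProd`).

*Irreducible polynomials in residue classes.*  For a nontrivial character modulo `a` the `L`-series is
a polynomial in `u`, because monic polynomials of large degree are equidistributed modulo `a`.
All its inverse zeros lie strictly inside the disc of radius `q`: this follows from the inequality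
`Re (z ^ n S_n) + q ^ n ≥ 1 + Re (z ^ n ψ(X) ^ n)` for the weighted prime sums `S_n`, which holds for
every rotation `z` (`norm_primeSum_le`).  Hence the prime sums are `O(ρ ^ n)` with `ρ < q`, and
orthogonality of characters produces irreducible polynomials of every large degree.
-/

/-- An elementary matrix (transvection) in `SL_n(R)`: a matrix that differs from the
identity matrix in at most one off-diagonal entry. -/
def IsElementary {n : ℕ} {R : Type*} [CommRing R]
    (E : Matrix.SpecialLinearGroup (Fin n) R) : Prop :=
  ∃ (i j : Fin n) (c : R), i ≠ j ∧
    (E : Matrix (Fin n) (Fin n) R) = Matrix.transvection i j c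

/-! ### Inverse zeros of polynomials and power sums -/

/-- The relation `X f' = f A` between formal power series: `A` is `X` times the logarithmic
derivative of `f`. -/
def LogDer (f A : PowerSeries ℂ) : Prop :=
  PowerSeries.X * PowerSeries.derivative ℂ f = f * A

theorem LogDer.coeff {f A : PowerSeries ℂ} (h : LogDer f A) (n : ℕ) :
    (n : ℂ) * PowerSeries.coeff n f =
      ∑ p ∈ Finset.HasAntidiagonal.antidiagonal n, PowerSeries.coeff p.1 f * PowerSeries.coeff p.2 A := by
  rw [← PowerSeries.coeff_mul, ← h]
  cases n with
  | zero => simp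
  | succ n => rw [PowerSeries.coeff_succ_X_mul, PowerSeries.coeff_derivative]; push_cast; ring

theorem LogDer.mul {f A g B : PowerSeries ℂ} (hf : LogDer f A) (hg : LogDer g B) :
    LogDer (f * g) (A + B) := by
  unfold LogDer at *
  rw [Derivation.leibniz]
  simp only [smul_eq_mul]
  linear_combination f * hg + g * hf

/-- The polynomial `∏ (1 - ω X)` over a multiset of complex numbers, as a power series. -/
noncomputable def prodSer (s : Multiset ℂ) : PowerSeries ℂ :=
  (s.map fun ω => 1 - PowerSeries.C ω * PowerSeries.X).prod

/-- The generating series of the negated power sums `-∑ ω ^ n`, `n ≥ 1`, of a multiset. -/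
noncomputable def psumSer (s : Multiset ℂ) : PowerSeries ℂ :=
  PowerSeries.mk fun n => if n = 0 then 0 else -(s.map (· ^ n)).sum

theorem prodSer_cons (ω : ℂ) (s : Multiset ℂ) :
    prodSer (ω ::ₘ s) = (1 - PowerSeries.C ω * PowerSeries.X) * prodSer s := by
  simp [prodSer]

theorem psumSer_cons (ω : ℂ) (s : Multiset ℂ) :
    psumSer (ω ::ₘ s) = psumSer {ω} + psumSer s := by
  ext n
  by_cases h : n = 0 <;> simp [psumSer, h]
  ring

theorem logDer_linear (ω : ℂ) :
    LogDer (1 - PowerSeries.C ω * PowerSeries.X) (psumSer {ω}) := by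
  unfold LogDer
  have h1 : PowerSeries.derivative ℂ (1 - PowerSeries.C ω * PowerSeries.X) =
      -PowerSeries.C ω := by
    ext n
    rw [PowerSeries.coeff_derivative]
    rcases n with _ | n <;> simp [PowerSeries.coeff_one, PowerSeries.coeff_C]
  rw [h1]
  ext n
  rcases n with _ | _ | n
  · simp [psumSer]
  · rw [sub_mul, mul_assoc, map_sub, PowerSeries.coeff_C_mul]
    simp [psumSer, PowerSeries.coeff_succ_X_mul]
  · rw [sub_mul, mul_assoc, map_sub, PowerSeries.coeff_C_mul]
    simp [psumSer, PowerSeries.coeff_succ_X_mul, PowerSeries.coeff_X]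
    ring

theorem logDer_prodSer (s : Multiset ℂ) : LogDer (prodSer s) (psumSer s) := by
  induction s using Multiset.induction_on with
  | empty =>
    have : psumSer 0 = 0 := by ext n; simp [psumSer]
    simp [LogDer, prodSer, this]
  | cons ω s ih =>
    rw [prodSer_cons, psumSer_cons]
    exact (logDer_linear ω).mul ih

theorem coeff_zero_prodSer (s : Multiset ℂ) : PowerSeries.coeff 0 (prodSer s) = 1 := by
  induction s using Multiset.induction_on with
  | empty => simp [prodSer]
  | cons ω s ih =>
    rw [prodSer_cons, sub_mul, mul_assoc, map_sub, PowerSeries.coeff_C_mul, one_mul, ih]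
    simp

theorem coeff_prodSer_eq_zero (s : Multiset ℂ) {n : ℕ} (hn : s.card < n) :
    PowerSeries.coeff n (prodSer s) = 0 := by
  induction s using Multiset.induction_on generalizing n with
  | empty =>
    have : n ≠ 0 := by simp at hn; omega
    simp [prodSer, PowerSeries.coeff_one, this]
  | cons ω s ih =>
    obtain ⟨n, rfl⟩ : ∃ m, n = m + 1 := ⟨n - 1, by omega⟩
    rw [Multiset.card_cons] at hn
    rw [prodSer_cons, sub_mul, mul_assoc, map_sub, PowerSeries.coeff_C_mul, one_mul,
      PowerSeries.coeff_succ_X_mul, ih (by omega), ih (by omega)]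
    simp

open ComplexOrder in
/-- The power sums of a finite multiset cannot all satisfy `-Re ∑ ω ^ n ≥ 1 + Re v ^ n` for a
fixed `v` in the unit disc.  The polynomial `∏ (1 - ω X)(1 - ω̄ X)` would have a logarithmic
derivative with nonnegative coefficients, so vanishing of its high coefficients
would force `v ^ n = -1` for all large `n`. -/
theorem not_forall_re_psum_le (s : Multiset ℂ) (v : ℂ) (hv : ‖v‖ ≤ 1)
    (h : ∀ n, 1 ≤ n → (s.map (· ^ n)).sum.re ≤ -(1 + (v ^ n).re)) : False := by
  set t := s + s.map (starRingEnd ℂ) with ht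
  have hA : ∀ n, PowerSeries.coeff n (psumSer t) =
      ((if n = 0 then 0 else -2 * (s.map (· ^ n)).sum.re : ℝ) : ℂ) := by
    intro n
    by_cases hn : n = 0
    · simp [psumSer, hn]
    · have : ((s.map (starRingEnd ℂ)).map (· ^ n)).sum = starRingEnd ℂ (s.map (· ^ n)).sum := by
        rw [map_multiset_sum, Multiset.map_map, Multiset.map_map]
        simp
      simp only [psumSer, PowerSeries.coeff_mk, hn, if_false, ht, Multiset.map_add,
        Multiset.sum_add, this, Complex.add_conj]
      push_cast; ring
  have hre : ∀ n, 0 ≤ 1 + (v ^ n).re := by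
    intro n
    have h1 := (abs_le.mp (Complex.abs_re_le_norm (v ^ n))).1
    have h2 : ‖v ^ n‖ ≤ 1 := by rw [norm_pow]; exact pow_le_one₀ (norm_nonneg _) hv
    linarith
  have hA0 : ∀ n, 0 ≤ PowerSeries.coeff n (psumSer t) := by
    intro n
    rw [hA, Complex.zero_le_real]
    split_ifs with hn
    · exact le_rfl
    · linarith [h n (by omega), hre n]
  have hf0 : ∀ n, 0 ≤ PowerSeries.coeff n (prodSer t) := by
    intro n
    induction n using Nat.strong_induction_on with
    | _ n ih =>
      rcases Nat.eq_zero_or_pos n with rfl | hn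
      · rw [coeff_zero_prodSer]; exact zero_le_one
      · have h1 := (logDer_prodSer t).coeff n
        have h2 : 0 ≤ (n : ℂ) * PowerSeries.coeff n (prodSer t) := by
          rw [h1]
          refine Finset.sum_nonneg fun p hp => ?_
          rw [Finset.HasAntidiagonal.mem_antidiagonal] at hp
          rcases Nat.eq_zero_or_pos p.2 with h0 | h0
          · rw [h0, hA 0]; simp
          · exact mul_nonneg (ih _ (by omega)) (hA0 _)
        have hn' : (0 : ℂ) ≤ (n : ℂ)⁻¹ := by
          simp
        have h3 := mul_nonneg hn' h2
        rwa [inv_mul_cancel_left₀ (by exact_mod_cast hn.ne')] at h3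
  have hz : ∀ n, t.card < n → v ^ n = -1 := by
    intro n hn
    have h1 := (logDer_prodSer t).coeff n
    rw [coeff_prodSer_eq_zero t hn, mul_zero] at h1
    have h2 := (Finset.sum_eq_zero_iff_of_nonneg
      (fun p _ => mul_nonneg (hf0 p.1) (hA0 p.2))).mp h1.symm (0, n) (by simp)
    rw [coeff_zero_prodSer, one_mul, hA, if_neg (by omega)] at h2
    have h3 : -2 * (s.map (· ^ n)).sum.re = 0 := by exact_mod_cast h2
    have h4 : (v ^ n).re = -1 := by
      linarith [h n (by omega), hre n]
    have h5 : ‖v ^ n‖ ≤ 1 := by rw [norm_pow]; exact pow_le_one₀ (norm_nonneg _) hv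
    have h6 := Complex.sq_norm (v ^ n)
    rw [Complex.normSq_apply, h4] at h6
    have h7 : (v ^ n).im = 0 := by nlinarith [norm_nonneg (v ^ n), sq_nonneg (v ^ n).im]
    apply Complex.ext <;> simp [h4, h7]
  have h1 := hz (t.card + 1) (by omega)
  have h2 := hz ((t.card + 1) * 2) (by omega)
  rw [pow_mul, h1] at h2
  norm_num at h2

/-- The multiset consists of the inverses of the roots. -/
theorem exists_multiset_of_poly (p : Polynomial ℂ) (hp : p.coeff 0 = 1) :
    ∃ s : Multiset ℂ, (p : PowerSeries ℂ) = prodSer s := by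
  refine ⟨p.roots.map (·⁻¹), ?_⟩
  have hsp := (IsAlgClosed.splits p).eq_prod_roots
  have hr : ∀ r ∈ p.roots, r ≠ 0 := by
    rintro r hr rfl
    have h1 := Polynomial.isRoot_of_mem_roots hr
    rw [Polynomial.IsRoot, ← Polynomial.coeff_zero_eq_eval_zero, hp] at h1
    exact one_ne_zero h1
  have key : ∀ s : Multiset ℂ, (∀ r ∈ s, r ≠ 0) →
      (((s.map fun r => Polynomial.X - Polynomial.C r).prod : Polynomial ℂ) : PowerSeries ℂ) =
        PowerSeries.C (s.map (- ·)).prod * prodSer (s.map (·⁻¹)) := by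
    intro s
    induction s using Multiset.induction_on with
    | empty => simp [prodSer]
    | cons r s ih =>
      intro h
      rw [Multiset.map_cons, Multiset.prod_cons, Polynomial.coe_mul,
        ih fun x hx => h x (Multiset.mem_cons_of_mem hx), Multiset.map_cons, Multiset.prod_cons,
        Multiset.map_cons, prodSer_cons, map_mul]
      have h0 : r ≠ 0 := h r (Multiset.mem_cons_self r s)
      have h1 : ((Polynomial.X - Polynomial.C r : Polynomial ℂ) : PowerSeries ℂ) =
          PowerSeries.C (-r) * (1 - PowerSeries.C r⁻¹ * PowerSeries.X) := by
        rw [mul_sub, ← mul_assoc, ← map_mul, neg_mul, mul_inv_cancel₀ h0]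
        simp
        ring
      rw [h1]; ring
  have h2 : (p : PowerSeries ℂ) = PowerSeries.C (p.leadingCoeff * (p.roots.map (- ·)).prod) *
      prodSer (p.roots.map (·⁻¹)) := by
    conv_lhs => rw [hsp]
    rw [Polynomial.coe_mul, key _ hr, Polynomial.coe_C, map_mul, mul_assoc]
  have h3 : PowerSeries.coeff 0 (p : PowerSeries ℂ) = 1 := by rw [Polynomial.coeff_coe, hp]
  rw [h2, PowerSeries.coeff_C_mul, coeff_zero_prodSer, mul_one] at h3
  rw [h2, h3, map_one, one_mul]

/-- Analytic heart of the prime number theorem for a progression: if `c` is the (finitely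
supported) coefficient sequence of an `L`-polynomial and `S` the associated sequence of weighted
prime power sums, then the lower bound `1 + Re (z v) ^ n` on `q ^ n + Re (z ^ n S n)` for all twists
`z` on the unit circle forces all inverse zeros into the open disc of radius `q`. -/
theorem norm_primeSum_le (c S : ℕ → ℂ) (q : ℝ) (hq : 0 < q) (c0 : c 0 = 1)
    (N : ℕ) (hc : ∀ n, N ≤ n → c n = 0)
    (newton : ∀ n : ℕ, (n : ℂ) * c n = ∑ p ∈ Finset.HasAntidiagonal.antidiagonal n, c p.1 * S p.2)
    (v : ℂ) (hv : ‖v‖ ≤ 1)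
    (hpos : ∀ z : ℂ, ‖z‖ = 1 → ∀ n, 1 ≤ n →
      1 + ((z * v) ^ n).re ≤ (z ^ n * S n).re + q ^ n) :
    ∃ ρ C : ℝ, 0 ≤ ρ ∧ ρ < q ∧ 0 ≤ C ∧ ∀ n, 1 ≤ n → ‖S n‖ ≤ C * ρ ^ n := by
  have hp0 : (PowerSeries.trunc N (PowerSeries.mk c) : PowerSeries ℂ) = PowerSeries.mk c := by
    ext n
    rw [Polynomial.coeff_coe, PowerSeries.coeff_trunc]
    split_ifs with h
    · rfl
    · rw [PowerSeries.coeff_mk, hc n (by omega)]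
  obtain ⟨s, hs⟩ := exists_multiset_of_poly (PowerSeries.trunc N (PowerSeries.mk c)) (by
    rw [← Polynomial.coeff_coe, hp0, PowerSeries.coeff_mk, c0])
  rw [hp0] at hs
  have hL : LogDer (PowerSeries.mk c) (PowerSeries.mk S) := by
    unfold LogDer
    ext n
    have h1 : PowerSeries.coeff n (PowerSeries.mk c * PowerSeries.mk S) = (n : ℂ) * c n := by
      rw [PowerSeries.coeff_mul, newton]
      simp only [PowerSeries.coeff_mk]
    rw [h1]
    cases n with
    | zero => simp
    | succ n =>
      rw [PowerSeries.coeff_succ_X_mul, PowerSeries.coeff_derivative, PowerSeries.coeff_mk]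
      push_cast; ring
  have hne : PowerSeries.mk c ≠ 0 := by
    intro h
    have := congrArg (PowerSeries.coeff 0) h
    simp [c0] at this
  have hS' : PowerSeries.mk S = psumSer s := by
    have h1 := logDer_prodSer s
    rw [← hs] at h1
    exact mul_left_cancel₀ hne (hL.symm.trans h1)
  have hS : ∀ n, 1 ≤ n → S n = -(s.map (· ^ n)).sum := by
    intro n hn
    have := congrArg (PowerSeries.coeff n) hS'
    simpa [psumSer, show n ≠ 0 by omega] using this
  have hlt : ∀ ω ∈ s, ‖ω‖ < q := by
    intro ω hω
    by_contra hge
    push Not at hge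
    obtain ⟨s', rfl⟩ := Multiset.exists_cons_of_mem hω
    have hω0 : (‖ω‖ : ℂ) ≠ 0 := by
      have : 0 < ‖ω‖ := hq.trans_le hge
      exact_mod_cast ne_of_gt this
    -- the twist by `z` rotates the offending inverse zero onto the positive real axis
    set z : ℂ := starRingEnd ℂ ω / ‖ω‖ with hz
    have hz1 : ‖z‖ = 1 := by
      rw [hz, norm_div, RCLike.norm_conj, Complex.norm_real, norm_norm, div_self]
      exact_mod_cast hω0
    have hzω : z * ω = ‖ω‖ := by
      rw [hz, div_mul_eq_mul_div, Complex.conj_mul', sq, mul_div_assoc, div_self hω0, mul_one]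
    refine not_forall_re_psum_le (s'.map (z * ·)) (z * v) ?_ ?_
    · rw [norm_mul, hz1, one_mul]; exact hv
    · intro n hn
      have h1 := hpos z hz1 n hn
      rw [hS n hn, Multiset.map_cons, Multiset.sum_cons] at h1
      have h2 : ((s'.map (z * ·)).map (· ^ n)).sum = z ^ n * (s'.map (· ^ n)).sum := by
        rw [Multiset.map_map, ← Multiset.sum_map_mul_left]
        simp [mul_pow]
      have h3 : z ^ n * -(ω ^ n + (s'.map (· ^ n)).sum) =
          -((‖ω‖ ^ n : ℝ) : ℂ) - z ^ n * (s'.map (· ^ n)).sum := by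
        push_cast
        rw [← hzω]; ring
      rw [h3, Complex.sub_re, Complex.neg_re, Complex.ofReal_re] at h1
      rw [h2]
      have h4 : q ^ n ≤ ‖ω‖ ^ n := pow_le_pow_left₀ hq.le hge n
      linarith
  obtain ⟨ρ, hρ0, hρq, hρ⟩ : ∃ ρ : ℝ, 0 ≤ ρ ∧ ρ < q ∧ ∀ ω ∈ s, ‖ω‖ ≤ ρ := by
    clear hS hS' hs
    induction s using Multiset.induction_on with
    | empty => exact ⟨0, le_rfl, hq, by simp⟩
    | cons ω s ih =>
      obtain ⟨ρ, h0, h1, h2⟩ := ih fun x hx => hlt x (Multiset.mem_cons_of_mem hx)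
      refine ⟨max ρ ‖ω‖, le_max_of_le_left h0,
        max_lt h1 (hlt ω (Multiset.mem_cons_self _ _)), ?_⟩
      intro x hx
      rcases Multiset.mem_cons.mp hx with rfl | hx
      · exact le_max_right _ _
      · exact (h2 x hx).trans (le_max_left _ _)
  refine ⟨ρ, s.card, hρ0, hρq, by positivity, fun n hn => ?_⟩
  rw [hS n hn, norm_neg]
  clear hS hS' hs hlt
  induction s using Multiset.induction_on with
  | empty => simp
  | cons ω s ih =>
    rw [Multiset.map_cons, Multiset.sum_cons, Multiset.card_cons]
    have h1 := ih fun x hx => hρ x (Multiset.mem_cons_of_mem hx)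
    have h2 : ‖ω ^ n‖ ≤ ρ ^ n := by
      rw [norm_pow]
      exact pow_le_pow_left₀ (norm_nonneg _) (hρ ω (Multiset.mem_cons_self _ _)) n
    push_cast
    linarith [norm_add_le (ω ^ n) (s.map (· ^ n)).sum]

/-! ### `L`-functions of characters on polynomials -/

open Polynomial in
theorem finite_monics (F : Type*) [Field F] [Finite F] (n : ℕ) :
    {f : F[X] | f.Monic ∧ f.natDegree = n}.Finite := by
  have : Finite {f : F[X] // f.Monic ∧ f.natDegree = n} :=
    Finite.of_equiv _ ((monicEquivDegreeLT n).trans (degreeLTEquiv F n).toEquiv).symm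
  exact Set.finite_coe_iff.mp this

/-- The finset of monic polynomials of degree `n` over a finite field. -/
noncomputable def monics (F : Type*) [Field F] [Finite F] (n : ℕ) : Finset (Polynomial F) :=
  (finite_monics F n).toFinset

theorem mem_monics {F : Type*} [Field F] [Finite F] {n : ℕ} {f : Polynomial F} :
    f ∈ monics F n ↔ f.Monic ∧ f.natDegree = n := by simp [monics]

open Polynomial in
theorem card_monics (F : Type*) [Field F] [Fintype F] (n : ℕ) :
    (monics F n).card = Fintype.card F ^ n := by
  have h : Nat.card {f : F[X] // f.Monic ∧ f.natDegree = n} = Nat.card (Fin n → F) :=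
    Nat.card_congr ((monicEquivDegreeLT n).trans (degreeLTEquiv F n).toEquiv)
  rw [Nat.card_fun, Nat.card_eq_fintype_card (α := F), Nat.card_eq_fintype_card (α := Fin n),
    Fintype.card_fin] at h
  rw [← h, monics, ← Set.ncard_eq_toFinset_card _ (finite_monics F n)]
  rfl

open Classical in
/-- The finset of monic irreducible polynomials of degree at most `N`. -/
noncomputable def irrs (F : Type*) [Field F] [Finite F] (N : ℕ) : Finset (Polynomial F) :=
  ((Finset.range (N + 1)).biUnion (monics F)).filter Irreducible

theorem mem_irrs {F : Type*} [Field F] [Finite F] {N : ℕ} {f : Polynomial F} :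
    f ∈ irrs F N ↔ f.Monic ∧ f.natDegree ≤ N ∧ Irreducible f := by
  simp [irrs, mem_monics]; grind

/-- The coefficient of `u ^ n` in the `L`-function `∑ ψ f u ^ deg f` over monic `f`. -/
noncomputable def cseq {F : Type*} [Field F] [Finite F] (ψ : Polynomial F →* ℂ) (n : ℕ) : ℂ :=
  ∑ f ∈ monics F n, ψ f

/-- The von Mangoldt weighted sum of `ψ` over the monic prime powers `P ^ j` of degree `n`. -/
noncomputable def sseq {F : Type*} [Field F] [Finite F] (ψ : Polynomial F →* ℂ) (n : ℕ) : ℂ :=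
  ∑ P ∈ irrs F n, ∑ j ∈ Finset.Icc 1 n,
    if j * P.natDegree = n then (P.natDegree : ℂ) * ψ P ^ j else 0

theorem sseq_eq {F : Type*} [Field F] [Finite F] (ψ : Polynomial F →* ℂ) {n N : ℕ} (h : n ≤ N) :
    sseq ψ n = ∑ P ∈ irrs F N, ∑ j ∈ Finset.Icc 1 N,
      if j * P.natDegree = n then (P.natDegree : ℂ) * ψ P ^ j else 0 := by
  rw [sseq, ← Finset.sum_product', ← Finset.sum_product']
  apply Finset.sum_subset
  · intro x hx
    simp only [Finset.mem_product, mem_irrs, Finset.mem_Icc] at hx ⊢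
    exact ⟨⟨hx.1.1, hx.1.2.1.trans h, hx.1.2.2⟩, hx.2.1, hx.2.2.trans h⟩
  · intro x hx hx'
    simp only [Finset.mem_product, mem_irrs, Finset.mem_Icc] at hx hx'
    refine if_neg fun he => hx' ?_
    have h1 : 0 < x.1.natDegree := hx.1.2.2.natDegree_pos
    refine ⟨⟨hx.1.1, ?_, hx.1.2.2⟩, hx.2.1, ?_⟩
    · rw [← he]; exact Nat.le_mul_of_pos_left _ hx.2.1
    · rw [← he]; exact Nat.le_mul_of_pos_right _ h1

open UniqueFactorizationMonoid in
/-- Unique factorisation, by degrees: `deg f = ∑ deg P`, over prime powers `P ^ j ∣ f`. -/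
theorem natDegree_eq_sum {F : Type*} [Field F] [Finite F] {f : Polynomial F} (hf : f.Monic) :
    f.natDegree = ∑ P ∈ irrs F f.natDegree, ∑ j ∈ Finset.Icc 1 f.natDegree,
      open Classical in if P ^ j ∣ f then P.natDegree else 0 := by
  classical
  have hf0 : f ≠ 0 := hf.ne_zero
  have hmem : ∀ P ∈ normalizedFactors f, P.Monic ∧ Irreducible P ∧ P ∣ f := by
    intro P hP
    refine ⟨?_, irreducible_of_normalized_factor P hP, dvd_of_mem_normalizedFactors hP⟩
    have h1 := normalize_normalized_factor P hP
    rw [← h1]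
    exact Polynomial.monic_normalize (irreducible_of_normalized_factor P hP).ne_zero
  have h1 : f = (normalizedFactors f).prod := by
    have h2 := prod_normalizedFactors_eq hf0
    rw [hf.normalize_eq_self] at h2
    exact h2.symm
  have h2 : f.natDegree = ((normalizedFactors f).map Polynomial.natDegree).sum := by
    conv_lhs => rw [h1]
    rw [Polynomial.natDegree_multiset_prod_of_monic _ fun P hP => (hmem P hP).1]
  have h3 : f.natDegree = ∑ P ∈ irrs F f.natDegree,
      (normalizedFactors f).count P * P.natDegree := by
    conv_lhs => rw [h2, Finset.sum_multiset_map_count]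
    simp only [smul_eq_mul]
    apply Finset.sum_subset
    · intro P hP
      rw [Multiset.mem_toFinset] at hP
      obtain ⟨a, b, c⟩ := hmem P hP
      exact mem_irrs.mpr ⟨a, Polynomial.natDegree_le_of_dvd c hf0, b⟩
    · intro P _ hP
      rw [Multiset.mem_toFinset] at hP
      rw [Multiset.count_eq_zero_of_notMem hP, zero_mul]
  conv_lhs => rw [h3]
  refine Finset.sum_congr rfl fun P hP => ?_
  obtain ⟨hPm, hPd, hPi⟩ := mem_irrs.mp hP
  have hdvd : ∀ j, P ^ j ∣ f ↔ j ≤ (normalizedFactors f).count P := by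
    intro j
    rw [pow_dvd_iff_le_emultiplicity, emultiplicity_eq_count_normalizedFactors hPi hf0,
      hPm.normalize_eq_self]
    exact Nat.cast_le
  have hle : (normalizedFactors f).count P ≤ f.natDegree := by
    have := Polynomial.natDegree_le_of_dvd ((hdvd _).mpr le_rfl) hf0
    rw [Polynomial.natDegree_pow] at this
    exact (Nat.le_mul_of_pos_right _ hPi.natDegree_pos).trans this
  simp only [hdvd]
  rw [← Finset.sum_filter, Finset.sum_const, smul_eq_mul]
  congr 1
  have : (Finset.Icc 1 f.natDegree).filter (fun j => j ≤ (normalizedFactors f).count P) =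
      Finset.Icc 1 ((normalizedFactors f).count P) := by
    ext j; simp; omega
  rw [this, Nat.card_Icc]; simp

open Classical in
/-- The multiples of `P ^ j` of degree `n` are parametrised by the cofactor of `P ^ j`. -/
theorem sum_monics_dvd {F : Type*} [Field F] [Finite F] (ψ : Polynomial F →* ℂ) (n : ℕ)
    {P : Polynomial F} (hP : P.Monic) (j : ℕ) :
    (∑ f ∈ monics F n, if P ^ j ∣ f then ψ f else 0) =
      if j * P.natDegree ≤ n then ψ P ^ j * cseq ψ (n - j * P.natDegree) else 0 := by
  have hPj : (P ^ j).Monic := hP.pow j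
  have hdeg : (P ^ j).natDegree = j * P.natDegree := by rw [hP.natDegree_pow]
  rw [← Finset.sum_filter]
  split_ifs with h
  · rw [cseq, Finset.mul_sum]
    symm
    refine Finset.sum_bij (fun h _ => P ^ j * h) ?_ ?_ ?_ ?_
    · intro g hg
      rw [mem_monics] at hg
      rw [Finset.mem_filter, mem_monics]
      refine ⟨⟨hPj.mul hg.1, ?_⟩, dvd_mul_right _ _⟩
      rw [hPj.natDegree_mul hg.1, hdeg, hg.2]; omega
    · intro a _ b _ hab
      exact mul_left_cancel₀ hPj.ne_zero hab
    · intro f hf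
      rw [Finset.mem_filter, mem_monics] at hf
      obtain ⟨⟨hf1, hf2⟩, g, rfl⟩ := hf
      have hg : g.Monic := hPj.of_mul_monic_left hf1
      refine ⟨g, mem_monics.mpr ⟨hg, ?_⟩, rfl⟩
      rw [hPj.natDegree_mul hg, hdeg] at hf2
      omega
    · intro g _
      rw [map_mul, map_pow]
  · refine Finset.sum_eq_zero fun f hf => ?_
    rw [Finset.mem_filter, mem_monics] at hf
    exfalso
    have := Polynomial.natDegree_le_of_dvd hf.2 hf.1.1.ne_zero
    rw [hdeg, hf.1.2] at this
    exact h this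

/-- The coefficient form of `u L' / L = ∑ S_n u ^ n`. -/
theorem cseq_newton {F : Type*} [Field F] [Finite F] (ψ : Polynomial F →* ℂ) (n : ℕ) :
    (n : ℂ) * cseq ψ n =
      ∑ p ∈ Finset.HasAntidiagonal.antidiagonal n, cseq ψ p.1 * sseq ψ p.2 := by
  classical
  have hl : (n : ℂ) * cseq ψ n = ∑ P ∈ irrs F n, ∑ j ∈ Finset.Icc 1 n,
      if j * P.natDegree ≤ n then
        (P.natDegree : ℂ) * (ψ P ^ j * cseq ψ (n - j * P.natDegree)) else 0 := by
    have h1 : (n : ℂ) * cseq ψ n = ∑ f ∈ monics F n, ∑ P ∈ irrs F n, ∑ j ∈ Finset.Icc 1 n,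
        (P.natDegree : ℂ) * if P ^ j ∣ f then ψ f else 0 := by
      rw [cseq, Finset.mul_sum]
      refine Finset.sum_congr rfl fun f hf => ?_
      obtain ⟨hf1, hf2⟩ := mem_monics.mp hf
      have h2 := natDegree_eq_sum hf1
      rw [hf2] at h2
      have h3 : (n : ℂ) = ∑ P ∈ irrs F n, ∑ j ∈ Finset.Icc 1 n,
          if P ^ j ∣ f then (P.natDegree : ℂ) else 0 := by
        conv_lhs => rw [h2]
        push_cast
        rfl
      conv_lhs => rw [h3]
      rw [Finset.sum_mul]
      refine Finset.sum_congr rfl fun P _ => ?_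
      rw [Finset.sum_mul]
      refine Finset.sum_congr rfl fun j _ => ?_
      split_ifs <;> simp
    rw [h1, Finset.sum_comm]
    refine Finset.sum_congr rfl fun P hP => ?_
    rw [Finset.sum_comm]
    refine Finset.sum_congr rfl fun j _ => ?_
    rw [← Finset.mul_sum, sum_monics_dvd ψ n (mem_irrs.mp hP).1]
    split_ifs <;> simp
  have hr : ∑ p ∈ Finset.HasAntidiagonal.antidiagonal n, cseq ψ p.1 * sseq ψ p.2 =
      ∑ p ∈ Finset.HasAntidiagonal.antidiagonal n, ∑ P ∈ irrs F n, ∑ j ∈ Finset.Icc 1 n,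
        if j * P.natDegree = p.2 then cseq ψ p.1 * ((P.natDegree : ℂ) * ψ P ^ j) else 0 := by
    refine Finset.sum_congr rfl fun p hp => ?_
    rw [Finset.HasAntidiagonal.mem_antidiagonal] at hp
    rw [sseq_eq ψ (show p.2 ≤ n by omega), Finset.mul_sum]
    refine Finset.sum_congr rfl fun P _ => ?_
    rw [Finset.mul_sum]
    refine Finset.sum_congr rfl fun j _ => ?_
    split_ifs <;> simp
  rw [hl, hr]
  symm
  rw [Finset.sum_comm]
  refine Finset.sum_congr rfl fun P _ => ?_
  rw [Finset.sum_comm]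
  refine Finset.sum_congr rfl fun j _ => ?_
  split_ifs with h
  · rw [Finset.sum_eq_single (n - j * P.natDegree, j * P.natDegree)]
    · rw [if_pos rfl]; ring
    · intro p hp hne
      rw [Finset.HasAntidiagonal.mem_antidiagonal] at hp
      refine if_neg fun he => hne ?_
      ext <;> simp <;> omega
    · intro hn
      exfalso
      apply hn
      rw [Finset.HasAntidiagonal.mem_antidiagonal]
      simp; omega
  · apply Finset.sum_eq_zero
    intro p hp
    rw [Finset.HasAntidiagonal.mem_antidiagonal] at hp
    exact if_neg fun he => h (by omega)

/-- The prime polynomial theorem in its exact weighted form, from `ζ(u) = 1 / (1 - q u)`. -/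
theorem sseq_one (F : Type*) [Field F] [Fintype F] {n : ℕ} (hn : 1 ≤ n) :
    sseq (1 : Polynomial F →* ℂ) n = (Fintype.card F : ℂ) ^ n := by
  set q : ℂ := (Fintype.card F : ℂ) with hq
  have hc : ∀ n, cseq (1 : Polynomial F →* ℂ) n = q ^ n := by
    intro n
    simp [cseq, card_monics, q]
  let S' : ℕ → ℂ := fun l => if l = 0 then 0 else q ^ l
  have h1 : PowerSeries.mk (cseq (1 : Polynomial F →* ℂ)) * PowerSeries.mk (sseq (1 : Polynomial F →* ℂ)) =
      PowerSeries.mk (cseq (1 : Polynomial F →* ℂ)) * PowerSeries.mk S' := by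
    ext m
    rw [PowerSeries.coeff_mul, PowerSeries.coeff_mul]
    simp only [PowerSeries.coeff_mk]
    rw [← cseq_newton, Finset.Nat.sum_antidiagonal_eq_sum_range_succ_mk, Finset.sum_range_succ]
    simp only [hc, S', Nat.sub_self, if_true, mul_zero, add_zero]
    rw [Finset.sum_congr rfl (g := fun _ => q ^ m)]
    · simp
    · intro k hk
      rw [Finset.mem_range] at hk
      rw [if_neg (by omega), ← pow_add]
      congr 1; omega
  have h0 : PowerSeries.mk (cseq (1 : Polynomial F →* ℂ)) ≠ 0 := by
    intro h
    have := congrArg (PowerSeries.coeff 0) h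
    simp [hc] at this
  have h2 := congrArg (PowerSeries.coeff n) (mul_left_cancel₀ h0 h1)
  simpa [S', show n ≠ 0 by omega] using h2

/-- `Re (z ^ n S_n) + q ^ n` is a sum over prime powers `P ^ j` of the nonnegative terms
`deg P * (1 + Re (z ^ n ψ P ^ j))`; the term of `X ^ n` alone gives the bound. -/
theorem sseq_pos {F : Type*} [Field F] [Fintype F] (ψ : Polynomial F →* ℂ)
    (hψ : ∀ f, ‖ψ f‖ ≤ 1) (z : ℂ) (hz : ‖z‖ = 1) (n : ℕ) (hn : 1 ≤ n) :
    1 + ((z * ψ Polynomial.X) ^ n).re ≤ (z ^ n * sseq ψ n).re + (Fintype.card F : ℝ) ^ n := by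
  have h1 : (Fintype.card F : ℝ) ^ n = (sseq (1 : Polynomial F →* ℂ) n).re := by
    rw [sseq_one F hn]; norm_cast
  have h2 : (z ^ n * sseq ψ n).re + (sseq (1 : Polynomial F →* ℂ) n).re =
      ∑ x ∈ irrs F n ×ˢ Finset.Icc 1 n,
        if x.2 * x.1.natDegree = n then
          (x.1.natDegree : ℝ) * (1 + (z ^ n * ψ x.1 ^ x.2).re) else 0 := by
    rw [← Complex.add_re, sseq, sseq, Finset.mul_sum, ← Finset.sum_add_distrib, Complex.re_sum,
      Finset.sum_product]
    refine Finset.sum_congr rfl fun P _ => ?_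
    rw [Finset.mul_sum, ← Finset.sum_add_distrib, Complex.re_sum]
    refine Finset.sum_congr rfl fun j _ => ?_
    split_ifs
    · rw [mul_left_comm, MonoidHom.one_apply, one_pow, mul_one, Complex.add_re,
        Complex.natCast_re, ← Complex.ofReal_natCast, Complex.re_ofReal_mul]
      ring
    · simp
  rw [h1, h2]
  have hnn : ∀ x ∈ irrs F n ×ˢ Finset.Icc 1 n,
      0 ≤ if x.2 * x.1.natDegree = n then
          (x.1.natDegree : ℝ) * (1 + (z ^ n * ψ x.1 ^ x.2).re) else 0 := by
    intro x _
    split_ifs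
    · refine mul_nonneg (Nat.cast_nonneg _) ?_
      have h3 := (abs_le.mp (Complex.abs_re_le_norm (z ^ n * ψ x.1 ^ x.2))).1
      have h4 : ‖z ^ n * ψ x.1 ^ x.2‖ ≤ 1 := by
        rw [norm_mul, norm_pow, norm_pow, hz, one_pow, one_mul]
        exact pow_le_one₀ (norm_nonneg _) (hψ _)
      linarith
    · exact le_rfl
  have h5 := Finset.single_le_sum hnn (a := (Polynomial.X, n)) (by
    rw [Finset.mem_product, mem_irrs, Finset.mem_Icc]
    exact ⟨⟨Polynomial.monic_X, by simpa using hn, Polynomial.irreducible_X⟩, hn, le_rfl⟩)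
  simpa [mul_pow] using h5

/-- The character `f ↦ χ (f mod a)` of the multiplicative monoid of polynomials. -/
noncomputable def modChar {F : Type*} [Field F] (a : Polynomial F)
    (χ : MulChar (Polynomial F ⧸ Ideal.span {a}) ℂ) : Polynomial F →* ℂ :=
  χ.toMonoidHom.comp (Ideal.Quotient.mk (Ideal.span {a})).toMonoidHom

theorem modChar_apply {F : Type*} [Field F] (a : Polynomial F)
    (χ : MulChar (Polynomial F ⧸ Ideal.span {a}) ℂ) (f : Polynomial F) :
    modChar a χ f = χ (Ideal.Quotient.mk (Ideal.span {a}) f) := rfl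

/-- Nontrivial characters modulo `a` sum to zero over the monic polynomials of any degree
`n ≥ deg a`, since these are equidistributed modulo `a`. -/
theorem cseq_modChar {F : Type*} [Field F] [Finite F] {a : Polynomial F} (ha : a ≠ 0)
    (χ : MulChar (Polynomial F ⧸ Ideal.span {a}) ℂ) (hχ : χ ≠ 1) {n : ℕ}
    (hn : a.natDegree ≤ n) : cseq (modChar a χ) n = 0 := by
  obtain ⟨g, hg⟩ := MulChar.ne_one_iff.mp hχ
  obtain ⟨u, hu⟩ := Ideal.Quotient.mk_surjective (g : Polynomial F ⧸ Ideal.span {a})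
  obtain ⟨w, hw⟩ := Ideal.Quotient.mk_surjective
    ((g⁻¹ : (Polynomial F ⧸ Ideal.span {a})ˣ) : Polynomial F ⧸ Ideal.span {a})
  have huw : a ∣ w * u - 1 := by
    rw [← Ideal.mem_span_singleton, ← Ideal.Quotient.eq, map_mul, hu, hw]
    simp
  -- multiplication by `u` on residues, keeping the quotient by `a`
  let T : Polynomial F → Polynomial F → Polynomial F := fun u f => f - f % a + (u * f) % a
  have hT : ∀ u f, a ∣ T u f - u * f := by
    intro u f
    have h1 := EuclideanDomain.div_add_mod f a
    have h2 := EuclideanDomain.div_add_mod (u * f) a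
    exact ⟨f / a - (u * f) / a, by simp only [T]; linear_combination h2 - h1⟩
  have hmem : ∀ u, ∀ f ∈ monics F n, T u f ∈ monics F n := by
    intro u f hf
    obtain ⟨h1, h2⟩ := mem_monics.mp hf
    have h3 : ((u * f) % a - f % a).degree < f.degree := by
      refine lt_of_lt_of_le (lt_of_le_of_lt (Polynomial.degree_sub_le _ _)
        (max_lt (EuclideanDomain.mod_lt _ ha) (EuclideanDomain.mod_lt _ ha))) ?_
      rw [Polynomial.degree_eq_natDegree ha, Polynomial.degree_eq_natDegree h1.ne_zero, h2]
      exact_mod_cast hn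
    have h4 : T u f = f + ((u * f) % a - f % a) := by simp only [T]; ring
    rw [h4, mem_monics]
    exact ⟨h1.add_of_left h3, by rw [Polynomial.natDegree_add_eq_left_of_degree_lt h3, h2]⟩
  have hinv : ∀ u w, a ∣ w * u - 1 → ∀ f, T w (T u f) = f := by
    intro u w huw f
    have h1 : (w * T u f) % a = f % a := by
      apply Polynomial.mod_eq_of_dvd_sub
      have h3 : w * T u f - f = w * (T u f - u * f) + (w * u - 1) * f := by ring
      rw [h3]
      exact dvd_add ((hT u f).mul_left _) (huw.mul_right _)
    have h2 : T w (T u f) = T u f - (T u f) % a + (w * T u f) % a := rfl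
    rw [h2, Polynomial.mod_eq_of_dvd_sub (hT u f), h1]
    simp only [T]; ring
  have hsum : modChar a χ u * cseq (modChar a χ) n = cseq (modChar a χ) n := by
    rw [cseq, Finset.mul_sum]
    refine Finset.sum_nbij' (T u) (T w) (hmem u) (hmem w) (fun f _ => hinv u w huw f)
      (fun f _ => hinv w u (by rwa [mul_comm]) f) ?_
    intro f _
    rw [← map_mul, modChar_apply, modChar_apply]
    congr 1
    rw [Ideal.Quotient.eq, Ideal.mem_span_singleton, ← neg_sub, dvd_neg]
    exact hT u f
  rw [modChar_apply, hu] at hsum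
  have h5 : (χ g - 1) * cseq (modChar a χ) n = 0 := by linear_combination hsum
  exact (mul_eq_zero.mp h5).resolve_left (sub_ne_zero.mpr hg)

/-! ### Irreducible polynomials in residue classes -/

theorem finite_quotient {F : Type*} [Field F] [Finite F] {a : Polynomial F} (ha : a ≠ 0) :
    Finite (Polynomial F ⧸ Ideal.span {a}) := by
  have : Module.Finite F (AdjoinRoot a) := (AdjoinRoot.powerBasis ha).finite
  exact Module.finite_of_finite F (M := AdjoinRoot a)

theorem MulChar.norm_apply_le_one {A : Type*} [CommRing A] [Finite A] (χ : MulChar A ℂ) (x : A) :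
    ‖χ x‖ ≤ 1 := by
  by_cases hx : IsUnit x
  · obtain ⟨u, rfl⟩ := hx
    have h : χ u ^ Nat.card Aˣ = 1 := by
      rw [← map_pow, ← Units.val_pow_eq_pow_val, pow_card_eq_one', Units.val_one, map_one]
    exact (Complex.norm_eq_one_of_pow_eq_one h Nat.card_pos.ne').le
  · rw [MulChar.map_nonunit χ hx]; simp

/-- Orthogonality of the characters of a finite commutative ring. -/
theorem sum_mulChar {A : Type*} [CommRing A] [Finite A] [Fintype (MulChar A ℂ)] {y : A}
    (hy : y ≠ 1) : ∑ χ : MulChar A ℂ, χ y = 0 := by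
  have : NeZero ((Monoid.exponent Aˣ : ℕ) : ℂ) :=
    ⟨Nat.cast_ne_zero.mpr Monoid.exponent_ne_zero_of_finite⟩
  obtain ⟨χ, hχ⟩ := MulChar.exists_apply_ne_one_of_hasEnoughRootsOfUnity A ℂ hy
  refine eq_zero_of_mul_eq_self_left hχ ?_
  simp only [Finset.mul_sum, ← MulChar.mul_apply]
  exact Fintype.sum_bijective _ (Group.mulLeft_bijective χ) _ _ fun χ' ↦ rfl

/-- The power-saving bound for prime sums twisted by a nontrivial character. -/
theorem norm_sseq_modChar_le {F : Type*} [Field F] [Fintype F] {a : Polynomial F} (ha : a ≠ 0)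
    (χ : MulChar (Polynomial F ⧸ Ideal.span {a}) ℂ) (hχ : χ ≠ 1) :
    ∃ ρ C : ℝ, 0 ≤ ρ ∧ ρ < Fintype.card F ∧ 0 ≤ C ∧
      ∀ n, 1 ≤ n → ‖sseq (modChar a χ) n‖ ≤ C * ρ ^ n := by
  have := finite_quotient ha
  have hle : ∀ f, ‖modChar a χ f‖ ≤ 1 := fun f => MulChar.norm_apply_le_one χ _
  refine norm_primeSum_le (cseq (modChar a χ)) (sseq (modChar a χ)) (Fintype.card F)
    (by exact_mod_cast Fintype.card_pos) ?_ a.natDegree (fun n hn => cseq_modChar ha χ hχ hn)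
    (cseq_newton _) (modChar a χ Polynomial.X) (hle _) (sseq_pos _ hle)
  have h1 : monics F 0 = {1} := by
    ext f
    rw [mem_monics, Finset.mem_singleton]
    constructor
    · rintro ⟨h1, h2⟩; exact h1.natDegree_eq_zero.mp h2
    · rintro rfl; simp
  rw [cseq, h1, Finset.sum_singleton, map_one]

theorem card_irrs_le (F : Type*) [Field F] [Fintype F] (n : ℕ) :
    (irrs F n).card ≤ (n + 1) * Fintype.card F ^ n := by
  classical
  refine (Finset.card_filter_le _ _).trans (Finset.card_biUnion_le.trans ?_)
  refine (Finset.sum_le_card_nsmul _ _ (Fintype.card F ^ n) fun d hd => ?_).trans (by simp)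
  rw [card_monics]
  exact Nat.pow_le_pow_right Fintype.card_pos (by simpa [Nat.lt_succ_iff] using hd)

theorem sum_weight_le (n : ℕ) {d : ℕ} (hd : 0 < d) :
    (∑ j ∈ Finset.Icc 1 n, if j * d = n then (d : ℝ) else 0) ≤ n := by
  by_cases h : ∃ j ∈ Finset.Icc 1 n, j * d = n
  · obtain ⟨j, hj, hjd⟩ := h
    rw [Finset.sum_eq_single j]
    · rw [if_pos hjd, ← hjd]
      exact_mod_cast Nat.le_mul_of_pos_left d (Finset.mem_Icc.mp hj).1
    · intro k _ hk
      refine if_neg fun hkd => hk ?_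
      exact Nat.eq_of_mul_eq_mul_right hd (hkd.trans hjd.symm)
    · intro h; exact absurd hj h
  · push Not at h
    rw [Finset.sum_eq_zero fun j hj => if_neg (h j hj)]
    positivity

/-- Proper prime powers contribute little to the weighted count. -/
theorem sum_proper_powers_le (F : Type*) [Field F] [Fintype F] (n : ℕ) :
    (∑ P ∈ irrs F n, ∑ j ∈ Finset.Icc 1 n,
      if j * P.natDegree = n ∧ P.natDegree ≠ n then (P.natDegree : ℝ) else 0) ≤
      n * (n + 1) * (Real.sqrt (Fintype.card F)) ^ n := by
  have h1 : (∑ P ∈ irrs F n, ∑ j ∈ Finset.Icc 1 n,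
      if j * P.natDegree = n ∧ P.natDegree ≠ n then (P.natDegree : ℝ) else 0) ≤
      ∑ P ∈ irrs F (n / 2), (n : ℝ) := by
    have h2 : irrs F (n / 2) ⊆ irrs F n := by
      intro P hP
      rw [mem_irrs] at hP ⊢
      exact ⟨hP.1, hP.2.1.trans (Nat.div_le_self _ _), hP.2.2⟩
    rw [← Finset.sum_subset h2]
    · refine Finset.sum_le_sum fun P hP => ?_
      refine le_trans (Finset.sum_le_sum fun j _ => ?_)
        (sum_weight_le n (mem_irrs.mp hP).2.2.natDegree_pos)
      split_ifs <;> first | exact le_rfl | positivity | (exfalso; tauto)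
    · intro P hP hP'
      refine Finset.sum_eq_zero fun j hj => if_neg ?_
      rintro ⟨h3, h4⟩
      apply hP'
      rw [mem_irrs] at hP ⊢
      refine ⟨hP.1, ?_, hP.2.2⟩
      rw [Finset.mem_Icc] at hj
      have h5 : j ≠ 1 := by rintro rfl; exact h4 (by simpa using h3)
      rw [Nat.le_div_iff_mul_le (by norm_num), mul_comm, ← h3]
      exact Nat.mul_le_mul_right _ (by omega)
  refine h1.trans ?_
  rw [Finset.sum_const, nsmul_eq_mul]
  have hq : (1 : ℝ) ≤ Fintype.card F := by exact_mod_cast Fintype.card_pos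
  have h6 : ((irrs F (n / 2)).card : ℝ) ≤ ((n : ℝ) + 1) * (Real.sqrt (Fintype.card F)) ^ n := by
    have h7 : ((irrs F (n / 2)).card : ℝ) ≤ ((n / 2 : ℕ) + 1) * (Fintype.card F : ℝ) ^ (n / 2) := by
      exact_mod_cast card_irrs_le F (n / 2)
    refine h7.trans (mul_le_mul ?_ ?_ (by positivity) (by positivity))
    · have : ((n / 2 : ℕ) : ℝ) ≤ n := by exact_mod_cast Nat.div_le_self _ _
      linarith
    · conv_lhs => rw [← Real.sq_sqrt (by positivity : (0 : ℝ) ≤ Fintype.card F)]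
      rw [← pow_mul]
      exact pow_le_pow_right₀ (Real.one_le_sqrt.mpr hq) (Nat.mul_div_le n 2)
  calc _ ≤ ((n : ℝ) + 1) * (Real.sqrt (Fintype.card F)) ^ n * n :=
        mul_le_mul_of_nonneg_right h6 (by positivity)
    _ = _ := by ring

/-- The trivial character modulo `a` only loses the prime divisors of `a`. -/
theorem norm_sseq_one_sub_le {F : Type*} [Field F] [Fintype F] {a : Polynomial F} (ha : a ≠ 0)
    {n : ℕ} (hn : 1 ≤ n) :
    ‖sseq (modChar a 1) n - (Fintype.card F : ℂ) ^ n‖ ≤ (irrs F a.natDegree).card * n := by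
  classical
  rw [← sseq_one F hn, sseq, sseq, ← Finset.sum_sub_distrib]
  have h1 : ∀ P ∈ irrs F n, ‖(∑ j ∈ Finset.Icc 1 n,
      if j * P.natDegree = n then (P.natDegree : ℂ) * modChar a 1 P ^ j else 0) -
      ∑ j ∈ Finset.Icc 1 n, (if j * P.natDegree = n then
        (P.natDegree : ℂ) * (1 : Polynomial F →* ℂ) P ^ j else 0)‖ ≤ if P ∣ a then (n : ℝ) else 0 := by
    intro P hP
    have hPi := (mem_irrs.mp hP).2.2
    rw [← Finset.sum_sub_distrib]
    split_ifs with hPa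
    · refine (norm_sum_le _ _).trans (le_trans (Finset.sum_le_sum fun j hj => ?_)
        (sum_weight_le n hPi.natDegree_pos))
      split_ifs
      · have h2 : modChar a 1 P = 0 ∨ modChar a 1 P = 1 := by
          rw [modChar_apply]
          by_cases hu : IsUnit (Ideal.Quotient.mk (Ideal.span {a}) P)
          · right; exact MulChar.one_apply hu
          · left; exact MulChar.map_nonunit _ hu
        rw [Finset.mem_Icc] at hj
        rcases h2 with h2 | h2 <;> rw [h2]
        · simp [show j ≠ 0 by omega]
        · simp
      · simp
    · have h2 : modChar a 1 P = 1 := by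
        rw [modChar_apply]
        apply MulChar.one_apply
        obtain ⟨x, y, hxy⟩ := (hPi.coprime_iff_not_dvd).mpr hPa
        refine IsUnit.of_mul_eq_one (Ideal.Quotient.mk _ x) ?_
        rw [← map_mul, ← map_one (Ideal.Quotient.mk (Ideal.span {a})), Ideal.Quotient.eq,
          Ideal.mem_span_singleton]
        exact ⟨-y, by linear_combination hxy⟩
      rw [h2]
      simp
  refine (norm_sum_le _ _).trans ((Finset.sum_le_sum h1).trans ?_)
  rw [← Finset.sum_filter, Finset.sum_const, nsmul_eq_mul]
  refine mul_le_mul_of_nonneg_right ?_ (by positivity)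
  norm_cast
  refine Finset.card_le_card fun P hP => ?_
  rw [Finset.mem_filter, mem_irrs] at hP
  rw [mem_irrs]
  exact ⟨hP.1.1, Polynomial.natDegree_le_of_dvd hP.2 ha, hP.1.2.2⟩

open Filter Topology in
/-- **Artin–Kornblum**: every reduced residue class modulo `a` contains monic irreducible
polynomials of every sufficiently large degree. -/
theorem exists_irreducible_mod {F : Type*} [Field F] [Fintype F] {a b : Polynomial F}
    (ha : a ≠ 0) (hab : IsCoprime a b) :
    ∃ N, ∀ n, N ≤ n → ∃ P : Polynomial F, P.Monic ∧ Irreducible P ∧ P.natDegree = n ∧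
      a ∣ P - b := by
  classical
  have := finite_quotient ha
  have : Fintype (MulChar (Polynomial F ⧸ Ideal.span {a}) ℂ) := Fintype.ofFinite _
  set K : ℝ := (Fintype.card (MulChar (Polynomial F ⧸ Ideal.span {a}) ℂ) : ℝ) with hK
  set q : ℝ := (Fintype.card F : ℝ) with hq
  have hq1 : 1 < q := by
    rw [hq]; exact_mod_cast Fintype.one_lt_card (α := F)
  obtain ⟨y, x, hxy⟩ := hab
  set π := Ideal.Quotient.mk (Ideal.span {a}) with hπ
  have hr : π x * π b = 1 := by
    rw [← map_mul, ← map_one π, Ideal.Quotient.eq, Ideal.mem_span_singleton]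
    exact ⟨-y, by linear_combination hxy⟩
  have hbound : ∀ χ : MulChar (Polynomial F ⧸ Ideal.span {a}) ℂ, ∃ ρ C : ℝ, 0 ≤ ρ ∧ ρ < q ∧ 0 ≤ C ∧
      (χ ≠ 1 → ∀ n, 1 ≤ n → ‖sseq (modChar a χ) n‖ ≤ C * ρ ^ n) := by
    intro χ
    by_cases h : χ = 1
    · exact ⟨0, 0, le_rfl, by linarith, le_rfl, fun h' => absurd h h'⟩
    · obtain ⟨ρ, C, h1, h2, h3, h4⟩ := norm_sseq_modChar_le ha χ h
      exact ⟨ρ, C, h1, h2, h3, fun _ => h4⟩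
  choose ρ C hρ0 hρq hC hb using hbound
  -- the total error term is `o(q ^ n)`
  have hlim : Tendsto (fun n : ℕ => (∑ χ, C χ * (ρ χ / q) ^ n) +
      ((irrs F a.natDegree).card * ((n : ℝ) ^ 1 * (1 / q) ^ n) +
        K * ((n : ℝ) ^ 2 * (Real.sqrt q / q) ^ n + (n : ℝ) ^ 1 * (Real.sqrt q / q) ^ n)))
      atTop (𝓝 ((∑ χ, C χ * 0) + ((irrs F a.natDegree).card * 0 + K * (0 + 0)))) := by
    have hsq : |Real.sqrt q / q| < 1 := by
      rw [abs_of_nonneg (by positivity), div_lt_one (by linarith)]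
      rw [Real.sqrt_lt' (by linarith)]
      nlinarith
    refine Tendsto.add ?_ (Tendsto.add ?_ (Tendsto.const_mul _ (Tendsto.add ?_ ?_)))
    · refine tendsto_finsetSum _ fun χ _ => Tendsto.const_mul _ ?_
      refine tendsto_pow_atTop_nhds_zero_of_lt_one (div_nonneg (hρ0 χ) (by linarith)) ?_
      rw [div_lt_one (by linarith)]; exact hρq χ
    · refine Tendsto.const_mul _ (tendsto_pow_const_mul_const_pow_of_abs_lt_one 1 ?_)
      rw [abs_of_nonneg (by positivity), div_lt_one (by linarith)]; exact hq1
    · exact tendsto_pow_const_mul_const_pow_of_abs_lt_one 2 hsq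
    · exact tendsto_pow_const_mul_const_pow_of_abs_lt_one 1 hsq
  simp only [mul_zero, add_zero, Finset.sum_const_zero] at hlim
  obtain ⟨N, hN⟩ := eventually_atTop.mp (hlim.eventually (gt_mem_nhds one_pos))
  refine ⟨max N 1, fun n hn => ?_⟩
  have hn1 : 1 ≤ n := (le_max_right _ _).trans hn
  specialize hN n ((le_max_left _ _).trans hn)
  by_contra! hno
  have hqn : 0 < q ^ n := by positivity
  -- detect the residue class by orthogonality
  have hdet : ‖∑ χ : MulChar (Polynomial F ⧸ Ideal.span {a}) ℂ, χ (π x) * sseq (modChar a χ) n‖ ≤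
      K * (n * (n + 1) * Real.sqrt q ^ n) := by
    have h1 : ∑ χ : MulChar (Polynomial F ⧸ Ideal.span {a}) ℂ, χ (π x) * sseq (modChar a χ) n =
        ∑ P ∈ irrs F n, ∑ j ∈ Finset.Icc 1 n, if j * P.natDegree = n then
          (P.natDegree : ℂ) * ∑ χ : MulChar (Polynomial F ⧸ Ideal.span {a}) ℂ,
            χ (π x * π P ^ j) else 0 := by
      simp only [sseq, Finset.mul_sum]
      rw [Finset.sum_comm]
      refine Finset.sum_congr rfl fun P _ => ?_
      rw [Finset.sum_comm]
      refine Finset.sum_congr rfl fun j _ => ?_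
      split_ifs
      · refine Finset.sum_congr rfl fun χ _ => ?_
        rw [modChar_apply, map_mul, map_pow]; ring
      · simp
    rw [h1]
    refine le_trans ?_ (mul_le_mul_of_nonneg_left (sum_proper_powers_le F n) (by positivity))
    rw [Finset.mul_sum]
    refine (norm_sum_le _ _).trans (Finset.sum_le_sum fun P hP => ?_)
    rw [Finset.mul_sum]
    refine (norm_sum_le _ _).trans (Finset.sum_le_sum fun j hj => ?_)
    by_cases h2 : j * P.natDegree = n
    · by_cases h3 : P.natDegree = n
      · have h4 : j = 1 := by
          rw [h3] at h2
          exact Nat.eq_of_mul_eq_mul_right hn1 (by rw [h2, one_mul])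
        have h5 : π x * π P ^ j ≠ 1 := by
          rw [h4, pow_one]
          intro h5
          refine hno P (mem_irrs.mp hP).1 (mem_irrs.mp hP).2.2 h3 ?_
          rw [← Ideal.mem_span_singleton, ← Ideal.Quotient.eq]
          change π P = π b
          linear_combination (π P) * (-hr) + π b * h5
        rw [if_pos h2, sum_mulChar h5]
        simp [h3]
      · rw [if_pos h2, if_pos ⟨h2, h3⟩, norm_mul, Complex.norm_natCast, mul_comm K]
        refine mul_le_mul_of_nonneg_left ?_ (by positivity)
        refine (norm_sum_le _ _).trans ?_
        refine (Finset.sum_le_card_nsmul _ _ 1 fun χ _ => MulChar.norm_apply_le_one χ _).trans ?_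
        simp [hK]
    · rw [if_neg h2, if_neg (by tauto)]; simp
  have hx1 : (1 : MulChar (Polynomial F ⧸ Ideal.span {a}) ℂ) (π x) = 1 :=
    MulChar.one_apply (IsUnit.of_mul_eq_one _ hr)
  have hmain : q ^ n ≤ (∑ χ, C χ * ρ χ ^ n) + ((irrs F a.natDegree).card * n +
      K * (n * (n + 1) * Real.sqrt q ^ n)) := by
    have h1 : (Fintype.card F : ℂ) ^ n =
        (∑ χ : MulChar (Polynomial F ⧸ Ideal.span {a}) ℂ, χ (π x) * sseq (modChar a χ) n) -
        (∑ χ ∈ Finset.univ.erase (1 : MulChar (Polynomial F ⧸ Ideal.span {a}) ℂ),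
          χ (π x) * sseq (modChar a χ) n) - (sseq (modChar a 1) n - (Fintype.card F : ℂ) ^ n) := by
      rw [← Finset.add_sum_erase _ _ (Finset.mem_univ
        (1 : MulChar (Polynomial F ⧸ Ideal.span {a}) ℂ)), hx1]
      ring
    have h2 : q ^ n = ‖(Fintype.card F : ℂ) ^ n‖ := by
      rw [norm_pow, Complex.norm_natCast]
    have h3 : ‖∑ χ ∈ Finset.univ.erase (1 : MulChar (Polynomial F ⧸ Ideal.span {a}) ℂ),
          χ (π x) * sseq (modChar a χ) n‖ ≤ ∑ χ, C χ * ρ χ ^ n := by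
      refine (norm_sum_le _ _).trans (le_trans (Finset.sum_le_sum fun χ hχ => ?_)
        (Finset.sum_le_sum_of_subset_of_nonneg (Finset.erase_subset _ _) fun χ _ _ =>
          mul_nonneg (hC χ) (pow_nonneg (hρ0 χ) n)))
      rw [norm_mul]
      refine (mul_le_of_le_one_left (norm_nonneg _) (MulChar.norm_apply_le_one χ _)).trans ?_
      exact hb χ (Finset.ne_of_mem_erase hχ) n hn1
    rw [h2, h1]
    have h4 := norm_sseq_one_sub_le ha hn1
    refine (norm_sub_le _ _).trans ?_
    have h5 := norm_sub_le (∑ χ : MulChar (Polynomial F ⧸ Ideal.span {a}) ℂ,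
        χ (π x) * sseq (modChar a χ) n)
      (∑ χ ∈ Finset.univ.erase (1 : MulChar (Polynomial F ⧸ Ideal.span {a}) ℂ),
          χ (π x) * sseq (modChar a χ) n)
    linarith
  have hfin : ((∑ χ, C χ * ρ χ ^ n) + ((irrs F a.natDegree).card * n +
      K * (n * (n + 1) * Real.sqrt q ^ n))) / q ^ n < 1 := by
    refine lt_of_eq_of_lt ?_ hN
    simp only [div_pow, one_pow]
    rw [add_div, add_div, Finset.sum_div]
    congr 1
    · refine Finset.sum_congr rfl fun χ _ => by ring
    · ring
  rw [div_lt_one hqn] at hfin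
  linarith

/-! ### Products of transvections -/

open Matrix in
/-- `M` is a product of at most `k` transvections. -/
def ElemProd {ι R : Type*} [Fintype ι] [DecidableEq ι] [CommRing R] (k : ℕ)
    (M : Matrix ι ι R) : Prop :=
  ∃ L : List (TransvectionStruct ι R), L.length ≤ k ∧ (L.map TransvectionStruct.toMatrix).prod = M

namespace ElemProd

open Matrix

variable {ι R : Type*} [Fintype ι] [DecidableEq ι] [CommRing R] {k l : ℕ} {M N : Matrix ι ι R}

theorem one : ElemProd 0 (1 : Matrix ι ι R) := ⟨[], by simp, by simp⟩

theorem mono (h : ElemProd k M) (hkl : k ≤ l) : ElemProd l M :=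
  let ⟨L, h1, h2⟩ := h
  ⟨L, h1.trans hkl, h2⟩

theorem mul (hM : ElemProd k M) (hN : ElemProd l N) : ElemProd (k + l) (M * N) := by
  obtain ⟨L, h1, rfl⟩ := hM
  obtain ⟨L', h3, rfl⟩ := hN
  exact ⟨L ++ L', by simp; omega, by simp⟩

theorem transvection {i j : ι} (hij : i ≠ j) (c : R) : ElemProd 1 (Matrix.transvection i j c) :=
  ⟨[⟨i, j, hij, c⟩], by simp, by simp⟩

theorem of_mul_transvection {i j : ι} (hij : i ≠ j) (c : R)
    (h : ElemProd k (M * Matrix.transvection i j c)) : ElemProd (k + 1) M := by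
  have := h.mul (transvection hij (-c))
  rwa [Matrix.mul_assoc, transvection_mul_transvection_same _ _ hij, add_neg_cancel,
    transvection_zero, Matrix.mul_one] at this

theorem of_transvection_mul {i j : ι} (hij : i ≠ j) (c : R)
    (h : ElemProd k (Matrix.transvection i j c * M)) : ElemProd (k + 1) M := by
  have := (transvection hij (-c)).mul h
  rwa [← Matrix.mul_assoc, transvection_mul_transvection_same _ _ hij, neg_add_cancel,
    transvection_zero, Matrix.one_mul, add_comm] at this

/-- `N` arises from `M` by adding `c` times column `i` to column `j`. -/
theorem col (i j : ι) (c : R) (h : ElemProd k N) (hij : i ≠ j)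
    (hN : N = M.updateCol j fun a => M a j + c * M a i) : ElemProd (k + 1) M := by
  refine of_mul_transvection hij c ?_
  convert h
  rw [hN]
  ext a b
  by_cases hb : b = j
  · subst hb; simp
  · rw [mul_transvection_apply_of_ne _ _ _ _ hb, updateCol_ne hb]

/-- `N` arises from `M` by adding `c` times row `j` to row `i`. -/
theorem row (i j : ι) (c : R) (h : ElemProd k N) (hij : i ≠ j)
    (hN : N = M.updateRow i fun b => M i b + c * M j b) : ElemProd (k + 1) M := by
  refine of_transvection_mul hij c ?_
  convert h
  rw [hN]
  ext a b
  by_cases ha : a = i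
  · subst ha; simp
  · rw [transvection_mul_apply_of_ne _ _ _ _ ha, updateRow_ne ha]

theorem map {κ S : Type*} [Fintype κ] [DecidableEq κ] [CommRing S]
    (φ : Matrix ι ι R →* Matrix κ κ S)
    (hφ : ∀ t : TransvectionStruct ι R, ∃ t' : TransvectionStruct κ S,
      t'.toMatrix = φ t.toMatrix) (h : ElemProd k M) : ElemProd k (φ M) := by
  choose f hf using hφ
  obtain ⟨L, h1, rfl⟩ := h
  refine ⟨L.map f, by simpa, ?_⟩
  rw [map_list_prod, List.map_map, List.map_map]
  congr 1
  exact List.map_congr_left fun t _ => hf t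

theorem reindex {κ : Type*} [Fintype κ] [DecidableEq κ] (e : ι ≃ κ) (h : ElemProd k M) :
    ElemProd k (Matrix.reindex e e M) :=
  h.map (reindexAlgEquiv R R e).toRingEquiv.toMonoidHom
    fun t => ⟨t.reindexEquiv e, t.toMatrix_reindexEquiv e⟩

theorem sumInl {κ : Type*} [Fintype κ] [DecidableEq κ] (h : ElemProd k M) :
    ElemProd k (fromBlocks M 0 0 (1 : Matrix κ κ R)) := by
  obtain ⟨L, h1, rfl⟩ := h
  refine ⟨L.map (TransvectionStruct.sumInl κ), by simpa, ?_⟩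
  have := TransvectionStruct.sumInl_toMatrix_prod_mul κ (1 : Matrix ι ι R) L 1
  rw [fromBlocks_one, Matrix.mul_one, Matrix.mul_one] at this
  rw [List.map_map, this]

theorem transpose (h : ElemProd k M) : ElemProd k Mᵀ := by
  obtain ⟨L, h1, rfl⟩ := h
  refine ⟨(L.map fun t => ⟨t.j, t.i, t.hij.symm, t.c⟩).reverse, by simpa, ?_⟩
  rw [transpose_list_prod, List.map_reverse, List.map_map, List.map_map]
  congr 2
  refine List.map_congr_left fun t _ => ?_
  simp [TransvectionStruct.toMatrix, Matrix.transvection]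

/-- Conjugation by a diagonal involution permutes the transvections. -/
theorem conj (d : ι → R) (hd : ∀ i, d i * d i = 1) (h : ElemProd k M) :
    ElemProd k (diagonal d * M * diagonal d) := by
  have hD : diagonal d * diagonal d = 1 := by
    rw [diagonal_mul_diagonal]; simp [hd]
  refine h.map (φ := { toFun := fun M => diagonal d * M * diagonal d
                       map_one' := by simp [hD]
                       map_mul' := fun A B => ?_ }) fun t => ⟨⟨t.i, t.j, t.hij, d t.i * t.c * d t.j⟩, ?_⟩
  · calc diagonal d * (A * B) * diagonal d = diagonal d * A * 1 * B * diagonal d := by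
          simp [Matrix.mul_assoc]
      _ = _ := by rw [← hD]; simp only [Matrix.mul_assoc]
  · simp [TransvectionStruct.toMatrix, Matrix.transvection, Matrix.mul_add, Matrix.add_mul, hD]
    ext a b
    rw [mul_diagonal, diagonal_mul, single_apply, single_apply]
    split_ifs with h
    · rw [h.1, h.2]
    · simp

/-- A factorisation into transvections lifts to one inside the special linear group. -/
theorem exists_list {n : ℕ} (M : SpecialLinearGroup (Fin n) R)
    (h : ElemProd k (M : Matrix (Fin n) (Fin n) R)) :
    ∃ L : List (SpecialLinearGroup (Fin n) R), L.length ≤ k ∧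
      (∀ E ∈ L, ∃ (i j : Fin n) (c : R), i ≠ j ∧
        (E : Matrix (Fin n) (Fin n) R) = Matrix.transvection i j c) ∧ L.prod = M := by
  obtain ⟨L, h1, h2⟩ := h
  let f : TransvectionStruct (Fin n) R → SpecialLinearGroup (Fin n) R :=
    fun t => ⟨t.toMatrix, t.det⟩
  refine ⟨L.map f, by simpa using h1, ?_, ?_⟩
  · intro E hE
    obtain ⟨t, _, rfl⟩ := List.mem_map.mp hE
    exact ⟨t.i, t.j, t.c, t.hij, rfl⟩
  · apply Subtype.ext
    rw [← h2]
    clear h1 h2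
    induction L with
    | nil => rfl
    | cons t L ih =>
      rw [List.map_cons, List.map_cons, List.prod_cons, List.prod_cons, ← ih]
      rfl

end ElemProd

/-! ### Elimination in size three -/

namespace ElemProd

open Matrix

variable {R : Type*} [CommRing R]

/-- A `2 × 2` block of determinant one with a unit in its corner costs four transvections. -/
theorem of_unit_corner {u v b p r : R} (huv : u * v = 1) (hdet : u * r - b * p = 1) :
    ElemProd 4 !![u, b, 0; p, r, 0; 0, 0, 1] := by
  set r' := r + v * (1 - b) * p with hr'
  have h1 : p = u * r' - 1 := by
    rw [hr']; linear_combination (-p * (1 - b)) * huv - hdet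
  refine col (N := !![u, 1, 0; p, r', 0; 0, 0, 1]) 0 1 (v * (1 - b)) ?_ (by decide) ?_
  rotate_left
  · ext i j; fin_cases i <;> fin_cases j <;> simp [hr']
    linear_combination (b - 1) * huv
  refine col (N := !![1, 1, 0; r' - 1, r', 0; 0, 0, 1]) 1 0 (1 - u) ?_ (by decide) ?_
  rotate_left
  · ext i j; fin_cases i <;> fin_cases j <;> simp
    linear_combination -h1
  refine col (N := !![1, 0, 0; r' - 1, 1, 0; 0, 0, 1]) 0 1 (-1) ?_ (by decide) ?_
  rotate_left
  · ext i j; fin_cases i <;> fin_cases j <;> simp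
  refine row (N := !![1, 0, 0; 0, 1, 0; 0, 0, 1]) 1 0 (1 - r') ?_ (by decide) ?_
  rotate_left
  · ext i j; fin_cases i <;> fin_cases j <;> simp
  rw [← one_fin_three]
  exact one

/-- A determinant-one block `(α, s₁ s₂ b; γ, δ)`, up to a sign of the last two rows, is a product
of `15` transvections as soon as `s₁ ∣ α - 1`, `s₂ ∣ α + 1` and `α` is a unit
modulo `b`: the third coordinate is used to strip the factors `s₁` and `s₂` off the off-diagonal
entry, after which `α` can be replaced by a unit. -/
theorem of_factors {α γ δ s₁ s₂ t₁ t₂ b t u v : R} (hdet : α * δ - s₁ * s₂ * b * γ = 1)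
    (h₁ : α = 1 + s₁ * t₁) (h₂ : α = -1 + s₂ * t₂) (h₃ : α = u + b * t) (huv : u * v = 1) :
    ElemProd 15 !![α, s₁ * s₂ * b, 0; -γ, -δ, 0; 0, 0, -1] := by
  set β := s₂ * b with hβ
  set e := β * γ - t₁ * δ with he
  set w := t₁ - s₂ with hw
  set g := 1 - b * γ + t₂ * e with hg
  have e1 : δ - s₁ * e = 1 := by rw [he, hβ]; linear_combination hdet - δ * h₁
  have e2 : e - s₂ * g = w := by
    rw [hg, hw, he, hβ]
    linear_combination (s₂ * b * γ - t₁ * δ) * h₂ + t₁ * hdet - s₂ * b * γ * h₁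
  refine col (N := !![α, s₁ * s₂ * b, α * β; -γ, -δ, -(β * γ); 0, 0, -1]) 0 2 β ?_ (by decide) ?_
  rotate_left
  · ext i j; fin_cases i <;> fin_cases j <;> simp [mul_comm]
  refine col (N := !![α, s₁ * s₂ * b, β; -γ, -δ, -e; 0, 0, -1]) 1 2 (-t₁) ?_ (by decide) ?_
  rotate_left
  · ext i j; fin_cases i <;> fin_cases j <;> simp
    · rw [hβ]; linear_combination -(s₂ * b) * h₁
    · rw [he]; ring
  refine col (N := !![α, 0, β; -γ, -1, -e; 0, s₁, -1]) 2 1 (-s₁) ?_ (by decide) ?_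
  rotate_left
  · ext i j; fin_cases i <;> fin_cases j <;> simp
    · rw [hβ]; ring
    · linear_combination e1
  refine col (N := !![α, -(b * α), β; -γ, -(1 - b * γ), -e; 0, s₁, -1]) 0 1 (-b) ?_ (by decide) ?_
  rotate_left
  · ext i j; fin_cases i <;> fin_cases j <;> simp
    ring
  refine col (N := !![α, b, β; -γ, -g, -e; 0, s₁ - t₂, -1]) 2 1 t₂ ?_ (by decide) ?_
  rotate_left
  · ext i j; fin_cases i <;> fin_cases j <;> simp
    · rw [hβ]; linear_combination b * h₂
    · rw [hg]; ring
    · ring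
  refine col (N := !![α, b, 0; -γ, -g, -w; 0, s₁ - t₂, 1 + s₁ * w]) 1 2 (-s₂) ?_ (by decide) ?_
  rotate_left
  · ext i j; fin_cases i <;> fin_cases j <;> simp
    · rw [hβ]; ring
    · linear_combination e2
    · rw [hw]; linear_combination h₂ - h₁
  refine col (N := !![u, b, 0; -γ + t * g, -g, -w; -t * (s₁ - t₂), s₁ - t₂, 1 + s₁ * w])
    1 0 (-t) ?_ (by decide) ?_
  rotate_left
  · ext i j; fin_cases i <;> fin_cases j <;> simp
    linear_combination -h₃
  set p := -γ + t * g with hp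
  set x := -t * (s₁ - t₂) + s₁ * p with hx
  set y := s₁ - t₂ + s₁ * -g with hy
  refine row (N := !![u, b, 0; p, -g, -w; x, y, 1]) 2 1 s₁ ?_ (by decide) ?_
  rotate_left
  · ext i j; fin_cases i <;> fin_cases j <;> simp [hx, hy]
  refine row (N := !![u, b, 0; p + w * x, -g + w * y, 0; x, y, 1]) 1 2 w ?_ (by decide) ?_
  rotate_left
  · ext i j; fin_cases i <;> fin_cases j <;> simp
  refine col (N := !![u, b, 0; p + w * x, -g + w * y, 0; 0, y, 1]) 2 0 (-x) ?_ (by decide) ?_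
  rotate_left
  · ext i j; fin_cases i <;> fin_cases j <;> simp
  refine col (N := !![u, b, 0; p + w * x, -g + w * y, 0; 0, 0, 1]) 2 1 (-y) ?_ (by decide) ?_
  rotate_left
  · ext i j; fin_cases i <;> fin_cases j <;> simp
  refine of_unit_corner huv ?_
  rw [hx, hy, hp]
  linear_combination -(-g + w * (s₁ - t₂ + s₁ * -g)) * h₃ +
    (-(α * g) + b * γ) * (h₂ - h₁ + s₁ * hw) - α * (s₁ - t₂) * e2 + α * hg - b * γ * h₂ -
    α * e1 + hdet

end ElemProd

section

open Matrix

/-- The embedding of `2 × 2` matrices as upper left blocks of `3 × 3` matrices. -/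
def block {R : Type*} [CommRing R] (g : Matrix (Fin 2) (Fin 2) R) : Matrix (Fin 3) (Fin 3) R :=
  !![g 0 0, g 0 1, 0; g 1 0, g 1 1, 0; 0, 0, 1]

theorem block_mul {R : Type*} [CommRing R] (g h : Matrix (Fin 2) (Fin 2) R) :
    block (g * h) = block g * block h := by
  ext i j
  fin_cases i <;> fin_cases j <;> simp [block, Matrix.mul_apply, Fin.sum_univ_three]

theorem block_transpose {R : Type*} [CommRing R] (g : Matrix (Fin 2) (Fin 2) R) :
    block gᵀ = (block g)ᵀ := by
  ext i j
  fin_cases i <;> fin_cases j <;> simp [block]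

/-- The diagonal sign matrix `diag(1, -1, -1)`. -/
def sgn (R : Type*) [CommRing R] : Fin 3 → R := ![1, -1, -1]

theorem sgn_mul_self (R : Type*) [CommRing R] (i : Fin 3) : sgn R i * sgn R i = 1 := by
  fin_cases i <;> simp [sgn]

/-- `g` lies in the algebra generated by `A`, and its corner entry is congruent modulo `b` to a unit
of the ring. -/
def PowLike {R : Type*} [CommRing R] (A : Matrix (Fin 2) (Fin 2) R) (b : R)
    (g : Matrix (Fin 2) (Fin 2) R) : Prop :=
  (∃ x y : R, g = x • 1 + y • A) ∧ ∃ u : Rˣ, b ∣ g 0 0 - u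

namespace PowLike

variable {R : Type*} [CommRing R] {A g h : Matrix (Fin 2) (Fin 2) R} {b : R}

/-- Modulo `b` both factors are lower triangular, so their corner entries multiply. -/
theorem mul (hA : A.det = 1) (hb : b ∣ A 0 1) (hg : PowLike A b g) (hh : PowLike A b h) :
    PowLike A b (g * h) := by
  obtain ⟨⟨x, y, hg⟩, u, hu⟩ := hg
  obtain ⟨⟨x', y', hh⟩, u', hu'⟩ := hh
  rw [det_fin_two] at hA
  refine ⟨⟨x * x' - y * y', x * y' + y * x' + y * y' * (A 0 0 + A 1 1), ?_⟩, u * u', ?_⟩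
  · rw [hg, hh]
    ext i j
    fin_cases i <;> fin_cases j <;> simp [Matrix.mul_apply, Fin.sum_univ_two]
    · linear_combination -(y * y') * hA
    · ring
    · ring
    · linear_combination -(y * y') * hA
  · have h1 : (g * h) 0 0 = g 0 0 * h 0 0 + g 0 1 * h 1 0 := by
      rw [Matrix.mul_apply, Fin.sum_univ_two]
    have h2 : b ∣ g 0 1 := by rw [hg]; simpa using hb.mul_left y
    have h3 : (g * h) 0 0 - ((u * u' : Rˣ) : R) =
        (g 0 0 - u) * h 0 0 + u * (h 0 0 - u') + g 0 1 * h 1 0 := by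
      rw [h1, Units.val_mul]; ring
    rw [h3]
    exact dvd_add (dvd_add (hu.mul_right _) (hu'.mul_left _)) (h2.mul_right _)

theorem adjugate (hb : b ∣ A 0 1) (hgd : g.det = 1) (hg : PowLike A b g) :
    PowLike A b g.adjugate := by
  obtain ⟨⟨x, y, hg⟩, u, hu⟩ := hg
  rw [det_fin_two] at hgd
  have h2 : b ∣ g 0 1 := by rw [hg]; simpa using hb.mul_left y
  refine ⟨⟨x + y * (A 0 0 + A 1 1), -y, ?_⟩, u⁻¹, ?_⟩
  · rw [adjugate_fin_two, hg]
    ext i j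
    fin_cases i <;> fin_cases j <;> simp <;> ring
  · have h3 : g 1 1 - ((u⁻¹ : Rˣ) : R) =
        ((u⁻¹ : Rˣ) : R) * (g 0 1 * g 1 0 - (g 0 0 - u) * g 1 1) := by
      have := u.inv_mul
      linear_combination (-g 1 1) * this + ((u⁻¹ : Rˣ) : R) * hgd
    have h4 : g.adjugate 0 0 = g 1 1 := by rw [adjugate_fin_two]; rfl
    rw [h4, h3]
    exact ((h2.mul_right (g 1 0)).sub (hu.mul_right (g 1 1))).mul_left _

theorem pow (hA : A.det = 1) (hb : b ∣ A 0 1) {k : ℕ} {u : Rˣ} (h : b ∣ A 0 0 ^ k - u) :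
    PowLike A b (A ^ k) := by
  rw [det_fin_two] at hA
  have key : ∀ j : ℕ, (∃ x y : R, A ^ j = x • 1 + y • A) ∧ b ∣ (A ^ j) 0 0 - A 0 0 ^ j := by
    intro j
    induction j with
    | zero => exact ⟨⟨1, 0, by simp⟩, by simp⟩
    | succ j ih =>
      obtain ⟨⟨x, y, hx⟩, hd⟩ := ih
      refine ⟨⟨-y, x + y * (A 0 0 + A 1 1), ?_⟩, ?_⟩
      · rw [pow_succ, hx]
        ext i j
        fin_cases i <;> fin_cases j <;> simp [Matrix.mul_apply, Fin.sum_univ_two]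
        · linear_combination -y * hA
        · ring
        · ring
        · linear_combination -y * hA
      · have h1 : (A ^ (j + 1)) 0 0 - A 0 0 ^ (j + 1) =
            ((A ^ j) 0 0 - A 0 0 ^ j) * A 0 0 + A 0 1 * (A ^ j) 1 0 := by
          rw [pow_succ', Matrix.mul_apply, Fin.sum_univ_two]; ring
        rw [h1]
        exact dvd_add (hd.mul_right _) (hb.mul_right _)
  refine ⟨(key k).1, u, ?_⟩
  have := dvd_add (key k).2 h
  rwa [sub_add_sub_cancel] at this

/-- `PowLike` passes to all integer powers of an element of determinant one. -/
theorem zpow {A : SpecialLinearGroup (Fin 2) R} (hb : b ∣ A 0 1) {g : SpecialLinearGroup (Fin 2) R}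
    (hg : PowLike A.1 b g.1) (z : ℤ) : PowLike A.1 b (g ^ z).1 := by
  let H : Subgroup (SpecialLinearGroup (Fin 2) R) :=
    { carrier := {g | PowLike A.1 b g.1}
      one_mem' := ⟨⟨1, 0, by simp⟩, 1, by simp⟩
      mul_mem' := fun hg hh => mul (A := A.1) A.det_coe hb hg hh
      inv_mem' := fun {g} hg => adjugate (A := A.1) hb g.det_coe hg }
  exact H.zpow_mem (x := g) hg z

/-- If `A` and `g = x + y A` have determinant one, then `y ∣ (x - 1) * (x + 1)`.  Splitting `y`
accordingly, and using that the corner entry of `g` is `x` modulo `y`, brings `g` into the shape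
required by `ElemProd.of_factors`. -/
theorem elemProd [DecompositionMonoid R] (hA : A.det = 1) (hgd : g.det = 1)
    (hg : PowLike A (A 0 1) g) : ElemProd 15 (diagonal (sgn R) * block g) := by
  obtain ⟨⟨x, y, hxy⟩, u, t, ht⟩ := hg
  rw [det_fin_two] at hA hgd
  have g00 : g 0 0 = x + y * A 0 0 := by rw [hxy]; simp
  have g01 : g 0 1 = y * A 0 1 := by rw [hxy]; simp
  have g10 : g 1 0 = y * A 1 0 := by rw [hxy]; simp
  have g11 : g 1 1 = x + y * A 1 1 := by rw [hxy]; simp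
  have hy : y ∣ (x - 1) * (x + 1) := by
    refine ⟨-(x * (A 0 0 + A 1 1) + y), ?_⟩
    rw [g00, g01, g10, g11] at hgd
    linear_combination hgd - y ^ 2 * hA
  obtain ⟨s₁, s₂, ⟨r₁, hr₁⟩, ⟨r₂, hr₂⟩, hs⟩ := exists_dvd_and_dvd_of_dvd_mul hy
  have := ElemProd.of_factors (α := g 0 0) (γ := g 1 0) (δ := g 1 1) (s₁ := s₁) (s₂ := s₂)
    (t₁ := r₁ + s₂ * A 0 0) (t₂ := r₂ + s₁ * A 0 0) (b := A 0 1) (t := t) (u := u)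
    (v := (u⁻¹ : Rˣ)) (by rw [← hs, ← g01]; exact hgd)
    (by rw [g00, hs]; linear_combination hr₁) (by rw [g00, hs]; linear_combination hr₂)
    (by linear_combination ht) (by simp)
  convert this using 1
  rw [← hs, ← g01]
  ext i j
  fin_cases i <;> fin_cases j <;> simp [sgn, block]

end PowLike

end

/-! ### The `2 × 2` block over `F[X]` -/

section

open Matrix Polynomial

variable {F : Type*} [Field F] [Fintype F]

/-- The norm from `F[X] / P` down to `F` is the power with exponent `(q ^ m - 1) / (q - 1)`, so this
power of a unit modulo `P` is congruent to a nonzero constant. -/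
theorem exists_dvd_pow_sub_unit {P a : F[X]} (hP : Irreducible P) (ha : ¬ P ∣ a) :
    ∃ u : F[X]ˣ, P ∣
      a ^ ((Fintype.card F ^ P.natDegree - 1) / (Fintype.card F - 1)) - (u : F[X]) := by
  have : Fact (Irreducible P) := ⟨hP⟩
  let pb := AdjoinRoot.powerBasis hP.ne_zero
  have : Module.Finite F (AdjoinRoot P) := pb.finite
  have : Finite (AdjoinRoot P) := Module.finite_of_finite F
  have hz : AdjoinRoot.mk P a ≠ 0 := by rwa [Ne, AdjoinRoot.mk_eq_zero]
  have hc : Algebra.norm F (AdjoinRoot.mk P a) ≠ 0 := Algebra.norm_ne_zero_iff.2 hz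
  have hcard : Nat.card (AdjoinRoot P) = Fintype.card F ^ P.natDegree := by
    rw [Module.natCard_eq_pow_finrank (K := F), Nat.card_eq_fintype_card, pb.finrank,
      AdjoinRoot.powerBasis_dim]
  have h := FiniteField.algebraMap_norm_eq_pow (K := F) (x := AdjoinRoot.mk P a)
  rw [hcard, Nat.card_eq_fintype_card] at h
  refine ⟨(Units.mk0 _ hc).map (C : F →+* F[X]).toMonoidHom, ?_⟩
  rw [← AdjoinRoot.mk_eq_zero, map_sub, map_pow, ← h, sub_eq_zero]
  rfl

theorem coprime_geom {q m n : ℕ} (hq : 1 < q) (hmn : m.Coprime n) :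
    ((q ^ m - 1) / (q - 1)).Coprime ((q ^ n - 1) / (q - 1)) := by
  have h := Nat.pow_sub_one_gcd_pow_sub_one q m n
  rw [hmn, pow_one] at h
  rw [← h]
  exact Nat.coprime_div_gcd_div_gcd (by rw [h]; omega)

/-- Write `A = (A ^ k) ^ x * (A ^ l) ^ y`, where `A ^ k` has a corner entry congruent to a unit modulo
`A 0 1`, and `A ^ l` modulo `A 1 0`; the second factor is handled through its transpose. -/
theorem elemProd_block_of_irreducible {A : Matrix (Fin 2) (Fin 2) F[X]} (hA : A.det = 1)
    (hP : Irreducible (A 0 1)) (hQ : Irreducible (A 1 0))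
    (hPQ : (A 0 1).natDegree.Coprime (A 1 0).natDegree) : ElemProd 30 (block A) := by
  have hdet := hA
  rw [det_fin_two] at hdet
  have hPa : ¬ A 0 1 ∣ A 0 0 := fun h => hP.not_isUnit <| isUnit_of_dvd_one <| by
    rw [← hdet]; exact (h.mul_right _).sub (dvd_mul_right _ _)
  have hQa : ¬ A 1 0 ∣ A 0 0 := fun h => hQ.not_isUnit <| isUnit_of_dvd_one <| by
    rw [← hdet]; exact (h.mul_right _).sub (dvd_mul_left _ _)
  obtain ⟨u, hu⟩ := exists_dvd_pow_sub_unit hP hPa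
  obtain ⟨v, hv⟩ := exists_dvd_pow_sub_unit hQ hQa
  have hkl := coprime_geom (Fintype.one_lt_card (α := F)) hPQ
  set k := (Fintype.card F ^ (A 0 1).natDegree - 1) / (Fintype.card F - 1)
  set l := (Fintype.card F ^ (A 1 0).natDegree - 1) / (Fintype.card F - 1)
  obtain ⟨x, y, hxy⟩ := (Nat.isCoprime_iff_coprime.2 hkl : IsCoprime (k : ℤ) l)
  let S : SpecialLinearGroup (Fin 2) F[X] := ⟨A, hA⟩
  let T : SpecialLinearGroup (Fin 2) F[X] := ⟨Aᵀ, by rw [det_transpose, hA]⟩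
  have h1 : PowLike A (A 0 1) ((S ^ k) ^ x).1 :=
    PowLike.zpow (A := S) dvd_rfl (PowLike.pow (k := k) hA dvd_rfl hu) x
  have h2 : PowLike Aᵀ (Aᵀ 0 1) ((T ^ l) ^ y).1 :=
    PowLike.zpow (A := T) dvd_rfl (PowLike.pow (k := l) (A := Aᵀ) T.2 dvd_rfl hv) y
  have e1 := h1.elemProd hA ((S ^ k) ^ x).2
  have e2 := (h2.elemProd T.2 ((T ^ l) ^ y).2).transpose
  have hT : (((T ^ l) ^ y).1)ᵀ = ((S ^ l) ^ y).1 := by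
    let f : SpecialLinearGroup (Fin 2) F[X] →* (SpecialLinearGroup (Fin 2) F[X])ᵐᵒᵖ :=
      { toFun := fun g => .op g.transpose
        map_one' := MulOpposite.unop_injective <| Subtype.ext transpose_one
        map_mul' := fun g h => MulOpposite.unop_injective <| Subtype.ext <| transpose_mul g.1 h.1 }
    have : f ((T ^ l) ^ y) = .op ((S ^ l) ^ y) := by
      rw [map_zpow, map_pow, MulOpposite.op_zpow, MulOpposite.op_pow]
      rfl
    exact congrArg (fun g => g.unop.1) this
  rw [transpose_mul, ← block_transpose, diagonal_transpose, hT] at e2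
  have e := (e1.mul e2).conj (sgn F[X]) (sgn_mul_self _)
  have hS : (S ^ k) ^ x * (S ^ l) ^ y = S := by
    rw [← _root_.zpow_natCast, ← _root_.zpow_natCast, ← _root_.zpow_mul, ← _root_.zpow_mul, ← _root_.zpow_add,
      show (k : ℤ) * x + l * y = 1 by linear_combination hxy, _root_.zpow_one]
  have hS' : ((S ^ k) ^ x).1 * ((S ^ l) ^ y).1 = A := congrArg Subtype.val hS
  have hd : diagonal (sgn F[X]) * diagonal (sgn F[X]) = 1 := by
    rw [diagonal_mul_diagonal]
    simp only [sgn_mul_self, diagonal_one]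
  convert e using 1
  generalize diagonal (sgn F[X]) = D at hd
  rw [← hS', block_mul]
  generalize block ((S ^ k) ^ x).1 = U
  generalize block ((S ^ l) ^ y).1 = V
  calc U * V = (D * D) * (U * V) * (D * D) := by rw [hd, Matrix.one_mul, Matrix.mul_one]
    _ = _ := by simp only [Matrix.mul_assoc]

/-- One column and one row operation replace the off-diagonal entries by irreducible polynomials of
coprime degrees, found in their residue classes modulo the corner entry. -/
theorem elemProd_block {A : Matrix (Fin 2) (Fin 2) F[X]} (hA : A.det = 1) :
    ElemProd 32 (block A) := by
  have hdet := hA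
  rw [det_fin_two] at hdet
  by_cases ha : A 0 0 = 0
  · have h4 := ElemProd.of_unit_corner (u := (1 : F[X])) (v := 1) (b := A 0 1)
      (p := A 1 0 + (-A 1 0) * A 1 1 ) (r := A 1 1) (by simp) (by
        linear_combination (1 - A 1 1) * hdet - (1 - A 1 1) * A 1 1 * ha)
    refine (h4.col 1 0 (-A 1 0) (by simp) ?_).mono (by norm_num)
    ext i j : 1
    fin_cases i <;> fin_cases j <;> simp [block, ha]
    linear_combination A 1 1 * ha - hdet
  have hab : IsCoprime (A 0 0) (A 0 1) := ⟨A 1 1, -A 1 0, by linear_combination hdet⟩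
  have hac : IsCoprime (A 0 0) (A 1 0) := ⟨A 1 1, -A 0 1, by linear_combination hdet⟩
  obtain ⟨M, hM⟩ := exists_irreducible_mod ha hab
  obtain ⟨N, hN⟩ := exists_irreducible_mod ha hac
  obtain ⟨P, -, hP, hPd, s, hs⟩ := hM M le_rfl
  have hM0 : 0 < M := hPd ▸ hP.natDegree_pos
  -- the degree `1 + M * N` is at least `N` and coprime to `M`
  obtain ⟨Q, -, hQ, hQd, t, ht⟩ := hN (1 + M * N) (by nlinarith)
  have h30 := elemProd_block_of_irreducible (A := !![A 0 0, P; Q, A 1 1 + s * A 1 0 + t * P])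
    (by rw [det_fin_two_of]; linear_combination hdet - A 1 0 * hs - P * ht) hP hQ (by
      simp [hPd, hQd])
  have h31 : ElemProd 31 (block !![A 0 0, P; A 1 0, A 1 1 + s * A 1 0]) := by
    refine h30.row 1 0 t (by simp) ?_
    ext i j : 1
    fin_cases i <;> fin_cases j <;> simp [block]
    linear_combination ht
  refine h31.col 0 1 s (by simp) ?_
  ext i j : 1
  fin_cases i <;> fin_cases j <;> simp [block]
  linear_combination hs

end

/-! ### Reduction of the size -/

section

open Matrix

variable {ι R : Type*} [Fintype ι] [DecidableEq ι] [CommRing R]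

theorem ElemProd.fromBlocks_upper (w : Matrix ι (Fin 1) R) :
    ElemProd (Fintype.card ι) (fromBlocks 1 w 0 1) := by
  suffices h : ∀ s : Finset ι,
      ElemProd s.card (fromBlocks 1 (Matrix.of fun i j => if i ∈ s then w i j else 0) 0
        (1 : Matrix (Fin 1) (Fin 1) R)) by
    have := h Finset.univ
    simpa using! this
  intro s
  induction s using Finset.induction_on with
  | empty =>
    rw [Finset.card_empty]
    convert ElemProd.one (R := R) (ι := ι ⊕ Fin 1)
    rw [← fromBlocks_one]
    congr 1
  | insert a s ha ih =>
    rw [Finset.card_insert_of_notMem ha]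
    convert ih.mul (ElemProd.transvection (i := Sum.inl a) (j := Sum.inr 0) (by simp) (w a 0))
      using 1
    have : Matrix.transvection (Sum.inl a) (Sum.inr 0) (w a 0) =
        fromBlocks (1 : Matrix ι ι R) (single a 0 (w a 0)) 0 (1 : Matrix (Fin 1) (Fin 1) R) := by
      rw [Matrix.transvection, ← fromBlocks_one]
      ext (i | i) (j | j) <;> simp [single_apply, one_apply]
    rw [this, fromBlocks_multiply]
    simp only [Matrix.one_mul, Matrix.mul_one, Matrix.zero_mul, Matrix.mul_zero, add_zero,
      zero_add]
    congr 1
    ext i j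
    obtain rfl := Subsingleton.elim j 0
    by_cases hi : i = a
    · subst hi; simp [ha]
    · simp [hi, Ne.symm hi]

theorem ElemProd.fromBlocks_lower (w : Matrix (Fin 1) ι R) :
    ElemProd (Fintype.card ι) (fromBlocks 1 0 w 1) := by
  have := (ElemProd.fromBlocks_upper wᵀ).transpose
  rwa [fromBlocks_transpose, transpose_one, transpose_one, transpose_zero,
    transpose_transpose] at this

/-- Once the entries of the last row above `ι` generate the unit ideal, the last row and the last
column are cleared by `3 * card ι` operations. -/
theorem ElemProd.of_unimodular {k : ℕ}
    (hk : ∀ N : Matrix ι ι R, N.det = 1 → ElemProd k (fromBlocks N 0 0 (1 : Matrix (Fin 1) (Fin 1) R)))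
    {A : Matrix ι ι R} {B : Matrix ι (Fin 1) R} {C : Matrix (Fin 1) ι R}
    {D : Matrix (Fin 1) (Fin 1) R} (hdet : (fromBlocks A B C D).det = 1)
    {v : Matrix ι (Fin 1) R} (hv : C * v = 1) :
    ElemProd (k + 3 * Fintype.card ι) (fromBlocks A B C D) := by
  set w := v * (1 - D) with hw
  set B' := A * w + B
  have hD : D = 1 - C * w := by rw [hw, ← Matrix.mul_assoc, hv, Matrix.one_mul, sub_sub_cancel]
  have h : fromBlocks A B C D = fromBlocks 1 B' 0 1 * fromBlocks (A - B' * C) 0 0 1 *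
      fromBlocks 1 0 C 1 * fromBlocks 1 (-w) 0 1 := by
    simp only [fromBlocks_multiply, Matrix.one_mul, Matrix.mul_one, Matrix.zero_mul,
      Matrix.mul_zero, add_zero, zero_add, sub_add_cancel]
    congr 1
    · simp [B']
    · rw [hD]; simp [sub_eq_neg_add]
  have hN : (A - B' * C).det = 1 := by
    rw [h] at hdet
    simpa using hdet
  rw [h]
  exact ((((fromBlocks_upper B').mul (hk _ hN)).mul (fromBlocks_lower C)).mul
    (fromBlocks_upper (-w))).mono (by omega)

variable [IsDomain R] [IsPrincipalIdealRing R]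

/-- A Chinese remainder argument over the prime factors of `g`. -/
theorem exists_isCoprime_add_mul {x z g : R} (hg : g ≠ 0)
    (h : ∃ a b c, a * x + b * z + c * g = 1) : ∃ t, IsCoprime (x + t * z) g := by
  induction g using UniqueFactorizationMonoid.induction_on_prime with
  | h₁ => exact absurd rfl hg
  | h₂ g hu => exact ⟨0, 0, hu.unit⁻¹.1, by simp⟩
  | h₃ g p hg0 hp ih =>
    obtain ⟨a, b, c, h⟩ := h
    obtain ⟨t, ht⟩ := ih hg0 ⟨a, b, c * p, by linear_combination h⟩
    by_cases hpt : p ∣ x + t * z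
    · have hpz : ¬ p ∣ g * z := fun hd => by
        rcases hp.dvd_or_dvd hd with hd | hd
        · obtain ⟨r, s, hrs⟩ := ht
          exact hp.not_isUnit (isUnit_of_dvd_one (hrs ▸ (hpt.mul_left r).add (hd.mul_left s)))
        · refine hp.not_isUnit (isUnit_of_dvd_one ?_)
          rw [← h]
          have hx : p ∣ x := (dvd_add_left (hd.mul_left t)).1 hpt
          exact ((hx.mul_left a).add (hd.mul_left b)).add ((dvd_mul_right p g).mul_left c)
      refine ⟨t + g, IsCoprime.mul_right ?_ ?_⟩
      · refine ((hp.irreducible.coprime_iff_not_dvd).2 fun hd => hpz ?_).symm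
        have := hd.sub hpt
        rwa [show x + (t + g) * z - (x + t * z) = g * z by ring] at this
      · rw [show x + (t + g) * z = x + t * z + z * g by ring]
        exact ht.add_mul_right_left z
    · exact ⟨t, IsCoprime.mul_right ((hp.irreducible.coprime_iff_not_dvd).2 hpt).symm ht⟩

/-- The stable range condition: adding a multiple of the last entry `z` of a unimodular row to one of
the others makes these others unimodular. -/
theorem exists_unimodular [Nontrivial ι] (x c : ι → R) (z c₀ : R)
    (h : ∑ i, c i * x i + c₀ * z = 1) :
    ∃ (i₀ : ι) (t : R) (w : ι → R), ∑ i, w i * Function.update x i₀ (x i₀ + t * z) i = 1 := by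
  have key : ∀ (i₀ : ι) (d y : ι → R) (a b : R),
      ∑ i, Function.update d i₀ a i * Function.update y i₀ b i =
        a * b + ∑ i, d i * Function.update y i₀ 0 i := by
    intro i₀ d y a b
    rw [← Finset.add_sum_erase _ _ (Finset.mem_univ i₀),
      ← Finset.add_sum_erase _ (fun i => d i * _) (Finset.mem_univ i₀)]
    simp only [Function.update_self, mul_zero, zero_add]
    congr 1
    refine Finset.sum_congr rfl fun i hi => ?_
    have hi := Finset.ne_of_mem_erase hi
    simp [hi]
  by_cases hx : ∃ i₁, x i₁ ≠ 0
  · obtain ⟨i₁, hi₁⟩ := hx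
    obtain ⟨i₀, hi₀⟩ := exists_ne i₁
    let I := Ideal.span (Set.range (Function.update x i₀ 0))
    obtain ⟨g, hg⟩ : ∃ g, I = Ideal.span {g} := (IsPrincipalIdealRing.principal I).principal
    have hg0 : g ≠ 0 := by
      rintro rfl
      have : x i₁ ∈ I := Ideal.subset_span ⟨i₁, by simp [hi₀.symm]⟩
      rw [hg] at this
      exact hi₁ (by simpa using this)
    have hs : ∑ i, c i * Function.update x i₀ 0 i ∈ I :=
      Ideal.sum_mem _ fun i _ => Ideal.mul_mem_left _ _ (Ideal.subset_span ⟨i, rfl⟩)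
    rw [hg, Ideal.mem_span_singleton'] at hs
    obtain ⟨e, he⟩ := hs
    obtain ⟨t, a, b, ht⟩ := exists_isCoprime_add_mul (x := x i₀) (z := z) hg0
      ⟨c i₀, c₀, e, by
        have := key i₀ c x (c i₀) (x i₀)
        rw [Function.update_eq_self, Function.update_eq_self, ← he] at this
        linear_combination h - this⟩
    have hb : b * g ∈ I := by rw [hg]; exact Ideal.mul_mem_left _ _ (Ideal.mem_span_singleton_self g)
    obtain ⟨d, hd⟩ := Submodule.mem_span_range_iff_exists_fun R |>.1 hb
    refine ⟨i₀, t, Function.update d i₀ a, ?_⟩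
    rw [key, ← ht, ← hd]
    rfl
  · push Not at hx
    obtain ⟨i₀⟩ : Nonempty ι := inferInstance
    refine ⟨i₀, c₀, Pi.single i₀ 1, ?_⟩
    simp_all [Pi.single_apply]

/-- Reduction of the size by one, at a cost of `3 * card ι + 1` operations. -/
theorem ElemProd.step [Nontrivial ι] {k : ℕ}
    (hk : ∀ N : Matrix ι ι R, N.det = 1 → ElemProd k (fromBlocks N 0 0 (1 : Matrix (Fin 1) (Fin 1) R)))
    (M : Matrix (ι ⊕ Fin 1) (ι ⊕ Fin 1) R) (hM : M.det = 1) :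
    ElemProd (k + 3 * Fintype.card ι + 1) M := by
  have h1 : (M * M.adjugate) (Sum.inr 0) (Sum.inr 0) = 1 := by
    rw [mul_adjugate, hM]; simp
  rw [Matrix.mul_apply, Fintype.sum_sum_type, Fin.sum_univ_one] at h1
  obtain ⟨i₀, t, w, hw⟩ := exists_unimodular (fun i => M (.inr 0) (.inl i))
    (fun i => M.adjugate (.inl i) (.inr 0)) (M (.inr 0) (.inr 0)) (M.adjugate (.inr 0) (.inr 0))
    (by simpa only [mul_comm] using h1)
  refine ElemProd.col (.inr 0) (.inl i₀) t ?_ (by simp) rfl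
  set M' := M.updateCol (.inl i₀) fun a => M a (.inl i₀) + t * M a (.inr 0) with hM'
  have hdet : M'.det = 1 := by
    rw [← hM]
    exact det_updateCol_add_smul_self M (by simp) t
  rw [← fromBlocks_toBlocks M'] at hdet ⊢
  refine ElemProd.of_unimodular hk hdet (v := Matrix.of fun i _ => w i) ?_
  ext a b
  obtain rfl := Subsingleton.elim a 0
  obtain rfl := Subsingleton.elim b 0
  rw [Matrix.mul_apply, one_apply_eq, ← hw]
  refine Finset.sum_congr rfl fun i _ => ?_
  by_cases hi : i = i₀
  · subst hi; simp [toBlocks₂₁, M', mul_comm]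
  · simp [toBlocks₂₁, M', hi, mul_comm]

open Polynomial in
/-- The size-three case costs `32 + 3 * 2 + 1 = 39` of the `41` operations allowed, and passing from
size `m` to `m + 1` costs `3 * m + 1`, which is exactly the increment of the bound. -/
theorem elemProd_of_det_eq_one {F : Type*} [Field F] [Fintype F] (n : ℕ)
    (M : Matrix (Fin (n + 3)) (Fin (n + 3)) F[X]) (hM : M.det = 1) :
    ElemProd ((3 * (n + 3) ^ 2 - (n + 3)) / 2 + 29) M := by
  have red : ∀ (m k l : ℕ), (∀ N : Matrix (Fin (m + 2)) (Fin (m + 2)) F[X], N.det = 1 →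
      ElemProd k (fromBlocks N 0 0 (1 : Matrix (Fin 1) (Fin 1) F[X]))) →
      k + 3 * (m + 2) + 1 ≤ l →
      ∀ M : Matrix (Fin (m + 3)) (Fin (m + 3)) F[X], M.det = 1 → ElemProd l M := by
    intro m k l hk hl M hM
    have e : Fin (m + 2) ⊕ Fin 1 ≃ Fin (m + 3) := finSumFinEquiv
    have := (ElemProd.step hk (Matrix.reindex e.symm e.symm M)
      (by rw [det_reindex_self, hM])).reindex e
    simp only [Fintype.card_fin, reindex_apply, Equiv.symm_symm, submatrix_submatrix,
      Equiv.self_comp_symm, submatrix_id_id] at this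
    exact this.mono hl
  induction n with
  | zero =>
    refine red 0 32 _ (fun N hN => ?_) (by norm_num) M hM
    convert (elemProd_block hN).reindex (finSumFinEquiv (m := 2) (n := 1)).symm
    ext (i | i) (j | j) : 1 <;> fin_cases i <;> fin_cases j <;> simp [block] <;> rfl
  | succ n ih =>
    refine red (n + 1) _ _ (fun N hN => (ih N hN).sumInl) ?_ M hM
    have h : 3 * (n + 1 + 3) ^ 2 - (n + 1 + 3) =
        3 * (n + 3) ^ 2 - (n + 3) + 2 * (3 * (n + 3) + 1) := by
      have h1 : 3 * (n + 1 + 3) ^ 2 = 3 * (n + 3) ^ 2 + 6 * n + 21 := by ring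
      have h2 : 3 * (n + 3) ^ 2 = 3 * n ^ 2 + 18 * n + 27 := by ring
      omega
    rw [h, Nat.add_mul_div_left _ _ two_pos]
    omega

end

/-- Let `F` be a finite field and `n ≥ 3`.  Every matrix in `SL_n(F[X])` is a product of
at most `(3n² - n)/2 + 29` elementary matrices; in particular, `SL_n(F[X])` is boundedly
generated by the elementary matrices. -/
theorem sl_n_polynomial_finite_field_bounded_elementary_generation
    (F : Type*) [Field F] [Fintype F] (n : ℕ) (hn : 3 ≤ n) :
    (∀ M : Matrix.SpecialLinearGroup (Fin n) (Polynomial F),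
      ∃ L : List (Matrix.SpecialLinearGroup (Fin n) (Polynomial F)),
        L.length ≤ (3 * n ^ 2 - n) / 2 + 29 ∧ (∀ E ∈ L, IsElementary E) ∧ L.prod = M) ∧
    (∃ ν : ℕ, 0 < ν ∧ ∀ M : Matrix.SpecialLinearGroup (Fin n) (Polynomial F),
      ∃ L : List (Matrix.SpecialLinearGroup (Fin n) (Polynomial F)),
        L.length ≤ ν ∧ (∀ E ∈ L, IsElementary E) ∧ L.prod = M) := by
  have h (M : Matrix.SpecialLinearGroup (Fin n) (Polynomial F)) :
      ∃ L : List (Matrix.SpecialLinearGroup (Fin n) (Polynomial F)),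
        L.length ≤ (3 * n ^ 2 - n) / 2 + 29 ∧ (∀ E ∈ L, IsElementary E) ∧ L.prod = M := by
    obtain ⟨m, rfl⟩ := Nat.exists_eq_add_of_le' hn
    exact ElemProd.exists_list M (elemProd_of_det_eq_one m M.1 M.2)
  exact ⟨h, _, Nat.succ_pos _, h⟩
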